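/- arXiv:1510.09043 — 3 statements merged into one kernel-verified Lean document; each statement's English description precedes it below -/
import Mathlib

section
/- Let X = Spec(B) be given by a local presentation attached to the multiplicity as in the context, with elimination algebra G_X^{(d)} and closed point ξ. Let C be the set of arcs φ in X through ξ satisfying r_{X,φ}/ord(φ) = ord(G_X^{(d)}). Then ord(G_X^{(d)}) = max_{φ ∈ C} ρ_{X,φ}/ord(φ), and this maximum is attained. -/
open Polynomial
open scoped ENNReal

noncomputable section

namespace NashMult

/-- The `m`-adic order `ν(f)` of an element `f` of a ring: the largest `n` with `f ∈ m ^ n`. -/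
def adicOrder {R : Type*} [CommRing R] (m : Ideal R) (f : R) : ℕ :=
  sSup {n : ℕ | f ∈ m ^ n}

/-- A subalgebra `G ⊆ R[W]` is *graded* if it is spanned by its "monomials", i.e. it is closed
under taking homogeneous components.  This is the condition expressing that `G = ⊕ I_l W^l`
for a family of ideals `I_l` (with `I_0 = R` and `I_i · I_j ⊆ I_{i+j}` automatic). -/
def Graded {R : Type*} [CommRing R] (G : Subalgebra R (Polynomial R)) : Prop :=
  ∀ p ∈ G, ∀ n : ℕ, (C (p.coeff n) * X ^ n : Polynomial R) ∈ G

/-- A *Rees algebra* over `R`: a finitely generated graded subalgebra of `R[W]`. -/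
def IsReesAlgebra {R : Type*} [CommRing R] (G : Subalgebra R (Polynomial R)) : Prop :=
  G.FG ∧ Graded G

/-- The order of (the Rees algebra) `G` at the closed point of the local ring `(R, m)`:
`ord(G) = inf { ν(f)/n : f W^n a homogeneous element of G, n ≥ 1, f ≠ 0 }`
(with value `∞` for the empty infimum). -/
def reesOrder {R : Type*} [CommRing R] (m : Ideal R) (G : Subalgebra R (Polynomial R)) : ℝ≥0∞ :=
  sInf {q : ℝ≥0∞ | ∃ (f : R) (n : ℕ), f ≠ 0 ∧ 1 ≤ n ∧ (C f * X ^ n : Polynomial R) ∈ G ∧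
    q = (adicOrder m f : ℝ≥0∞) / (n : ℝ≥0∞)}

/-- `G = ⊕ I_l W^l` is *differentially closed* relative to a family `D` of derivations if
`I_{l+1} ⊆ I_l` and `D_j (I_l) ⊆ I_{l-1}` for all `l ≥ 1` and all `j`. -/
def DiffClosed {k R ι : Type*} [CommRing k] [CommRing R] [Algebra k R]
    (D : ι → Derivation k R R) (G : Subalgebra R (Polynomial R)) : Prop :=
  (∀ (f : R) (l : ℕ), 1 ≤ l → (C f * X ^ (l + 1) : Polynomial R) ∈ G →
      (C f * X ^ l : Polynomial R) ∈ G) ∧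
  (∀ (f : R) (l : ℕ) (j : ι), (C f * X ^ (l + 1) : Polynomial R) ∈ G →
      (C (D j f) * X ^ l : Polynomial R) ∈ G)

/-- `Diff(M)`: the smallest graded differentially closed subalgebra of `R[W]` containing the
set `M`. -/
def diffClosure {k R ι : Type*} [CommRing k] [CommRing R] [Algebra k R]
    (D : ι → Derivation k R R) (M : Set (Polynomial R)) : Subalgebra R (Polynomial R) :=
  sInf {G : Subalgebra R (Polynomial R) | M ⊆ ↑G ∧ Graded G ∧ DiffClosed D G}

/-- The image `ψ(G)` of a Rees algebra `G` over `R` under a homomorphism (arc) `ψ : R → K⟦t⟧`: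
the Rees algebra over `K⟦t⟧` generated by all `ψ(g) W^l` for `g W^l` a homogeneous element of
`G` with `ψ(g) ≠ 0`. -/
def arcImage {R A : Type*} [CommRing R] [CommRing A] (ψ : R → A)
    (G : Subalgebra R (Polynomial R)) : Subalgebra A (Polynomial A) :=
  Algebra.adjoin A {p : Polynomial A | ∃ (g : R) (l : ℕ),
    (C g * X ^ l : Polynomial R) ∈ G ∧ ψ g ≠ 0 ∧ p = C (ψ g) * X ^ l}

/-- The order `ord(ψ)` of an arc `ψ : R → K⟦t⟧`: the largest `n` such that
`ψ(m) ⊆ t^n` (`t` being the ideal `tI`). -/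
def homOrd {R A : Type*} [CommRing R] [CommRing A] (m : Ideal R) (tI : Ideal A)
    (ψ : R → A) : ℕ :=
  sSup {n : ℕ | ∀ s ∈ m, ψ s ∈ tI ^ n}

/-- The maximal ideal `(t)` of `K⟦t⟧`. -/
def tId (K : Type*) [CommRing K] : Ideal (PowerSeries K) :=
  Ideal.span {(PowerSeries.X : PowerSeries K)}

/-- The `t`-adic order on `K⟦t⟧`. -/
def tOrd {K : Type*} [CommRing K] (g : PowerSeries K) : ℕ :=
  adicOrder (tId K) g

/-- The family of ideals `I_l` of the graded algebra `G = ⊕ I_l W^l`. -/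
def idealFam {R : Type*} [CommRing R] (G : Subalgebra R (Polynomial R)) (l : ℕ) : Ideal R :=
  Submodule.comap (Polynomial.monomial l : R →ₗ[R] Polynomial R) (Subalgebra.toSubmodule G)

/-- The closed point of the local ring `(R, m)` belongs to the singular locus of
`G = ⊕ I_l W^l`, i.e. `ν(I_l) ≥ l` for all `l ≥ 1`. -/
def SingFam {R : Type*} [CommRing R] (m : Ideal R) (I : ℕ → Ideal R) : Prop :=
  ∀ l : ℕ, 1 ≤ l → I l ≤ m ^ l

/-- The transform `⊕ (I_l · T^{-l}) W^l` of a Rees algebra `⊕ I_l W^l` over a DVR with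
uniformizer `T` (when the closed point lies in the singular locus, `I_l ⊆ (T^l)` and
`I_l · T^{-l} = (I_l : (T^l))`). -/
def transformFam {R : Type*} [CommRing R] (T : R) (I : ℕ → Ideal R) : ℕ → Ideal R :=
  fun l => (I l).colon (Ideal.span {T ^ l})

/-- The persistance: the least number `κ` of transforms needed so that the closed point no
longer lies in the singular locus. -/
def persist {R : Type*} [CommRing R] (m : Ideal R) (T : R)
    (G : Subalgebra R (Polynomial R)) : ℕ :=
  sInf {κ : ℕ | ¬ SingFam m ((transformFam T)^[κ] (idealFam G))}

/-- The set of elements of a ring integral over a subset `s` (monic equation with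
coefficients in `s`). -/
def intClos {A : Type*} [CommRing A] (s : Set A) : Set A :=
  {p : A | ∃ q : Polynomial A, q.Monic ∧ (∀ n, q.coeff n ∈ s) ∧ Polynomial.eval p q = 0}


/-- The monic polynomial `f = x^b + B_{b-2} x^{b-2} + ⋯ + B_1 x + B_0` with coefficients
`B_j = Bc j` (only `j ≤ b - 2` is relevant). -/
def minPolyOf {S : Type*} [CommRing S] (b : ℕ) (Bc : ℕ → S) : Polynomial S :=
  Polynomial.X ^ b + ∑ j ∈ Finset.range (b - 1), Polynomial.C (Bc j) * Polynomial.X ^ j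


/-- The maximal ideal `(z_1, …, z_d)` of the polynomial ring `k[z_1, …, z_d]`
(the kernel of evaluation at the origin). -/
def mPoly (k : Type) [Field k] (d : ℕ) : Ideal (MvPolynomial (Fin d) k) :=
  RingHom.ker (MvPolynomial.aeval (fun _ => (0 : k)) : MvPolynomial (Fin d) k →ₐ[k] k)

instance {k : Type} [Field k] {d : ℕ} : (mPoly k d).IsMaximal :=
  RingHom.ker_isMaximal_of_surjective _ (fun a => ⟨MvPolynomial.C a, by simp⟩)

instance {k : Type} [Field k] {d : ℕ} : (mPoly k d).IsPrime :=
  (inferInstance : (mPoly k d).IsMaximal).isPrime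

/-- `IsSLoc k d S` says that `S` is (identified with) the localization of `k[z_1, …, z_d]`
at the maximal ideal `(z_1, …, z_d)`. -/
abbrev IsSLoc (k : Type) [Field k] (d : ℕ) (S : Type) [CommRing S]
    [Algebra (MvPolynomial (Fin d) k) S] : Prop :=
  IsLocalization.AtPrime S (mPoly k d)

/-- The element `z_j` of `S`. -/
def zvar (k : Type) [Field k] (d : ℕ) (S : Type) [CommRing S]
    [Algebra (MvPolynomial (Fin d) k) S] (j : Fin d) : S :=
  algebraMap (MvPolynomial (Fin d) k) S (MvPolynomial.X j)

/-- The maximal ideal `m = (z_1, …, z_d)` of the local ring `S`. -/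
def mS (k : Type) [Field k] (d : ℕ) (S : Type) [CommRing S]
    [Algebra (MvPolynomial (Fin d) k) S] : Ideal S :=
  (mPoly k d).map (algebraMap (MvPolynomial (Fin d) k) S)


variable (k : Type) [Field k] (d : ℕ)
variable (S : Type) [CommRing S] [Algebra (MvPolynomial (Fin d) k) S] [Algebra k S]

/-- A local presentation, attached to the multiplicity, of a `d`-dimensional variety
`X = Spec B` at the closed point `ξ`:  `B = S[x_1,…,x_{n-d}]/I` with `I` prime,
`S → B` injective and finite, and the minimal polynomial over `Frac S` of the class `θ_i`
of `x_i` is `f_i = x_i^{b_i} + B_{i,b_i-2} x_i^{b_i-2} + ⋯ + B_{i,0}` with `b_i ≥ 2`,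
`B_{i,j} ∈ m^{b_i - j}`, and some `B_{i,j} ≠ 0`. -/
structure Presentation [IsDomain S] : Type 1 where
  /-- the number `n - d ≥ 1` of extra variables `x_i` -/
  e : ℕ
  he : 1 ≤ e
  /-- the prime ideal `I ⊆ S[x_1,…,x_{n-d}]` defining `X` -/
  I : Ideal (MvPolynomial (Fin e) S)
  hprime : I.IsPrime
  hinj : Function.Injective (algebraMap S (MvPolynomial (Fin e) S ⧸ I))
  hfinite : Module.Finite S (MvPolynomial (Fin e) S ⧸ I)
  /-- the degrees `b_i ≥ 2` -/
  b : Fin e → ℕ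
  hb : ∀ i, 2 ≤ b i
  /-- the coefficients `B_{i,j}` (only `j ≤ b_i - 2` is relevant) -/
  Bc : Fin e → ℕ → S
  /-- `f_i(θ_i) = 0` -/
  hroot : ∀ i, Polynomial.aeval (Ideal.Quotient.mk I (MvPolynomial.X i))
    (minPolyOf (b i) (Bc i)) = 0
  /-- `f_i` is irreducible over `Frac S`, i.e. it is the minimal polynomial of `θ_i` -/
  hirr : ∀ i, Irreducible ((minPolyOf (b i) (Bc i)).map (algebraMap S (FractionRing S)))
  /-- `B_{i,j} ∈ m^{b_i - j}` -/
  hmem : ∀ i, ∀ j ≤ b i - 2, Bc i j ∈ (mS k d S) ^ (b i - j)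
  /-- some `B_{i,j} ≠ 0` -/
  hnz : ∃ i, ∃ j ≤ b i - 2, Bc i j ≠ 0

variable [IsDomain S]
variable {k d S}

/-- The coordinate ring `B = S[x_1,…,x_{n-d}]/I` of `X`. -/
abbrev BRing (P : Presentation k d S) : Type :=
  MvPolynomial (Fin P.e) S ⧸ P.I

/-- The class `θ_i` of `x_i` in `B`. -/
def theta (P : Presentation k d S) (i : Fin P.e) : BRing P :=
  Ideal.Quotient.mk P.I (MvPolynomial.X i)

/-- The elimination algebra in dimension `d`:
`G_X^{(d)} = Diff( S[ B_{i,j} W^{b_i - j} : i, j ] )`, a Rees algebra over `S`. -/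
def elimAlg (P : Presentation k d S) (D : Fin d → Derivation k S S) :
    Subalgebra S (Polynomial S) :=
  diffClosure D {p : Polynomial S | ∃ i, ∃ j ≤ P.b i - 2,
    p = Polynomial.C (P.Bc i j) * Polynomial.X ^ (P.b i - j)}

/-- An arc in `X` through `ξ` (with the required nonvanishing): a `k`-algebra homomorphism
`φ : B → K⟦t⟧` sending the maximal ideal of `B` at `ξ` into `(t)`, with all `φ(θ_i)` and
`φ(z_j)` nonzero. -/
def IsArc (P : Presentation k d S) {K : Type} [Field K] [Algebra k K]
    (φ : BRing P →ₐ[k] PowerSeries K) : Prop :=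
  (∀ s ∈ mS k d S, φ (algebraMap S (BRing P) s) ∈ tId K) ∧
  (∀ i, φ (theta P i) ∈ tId K) ∧
  (∀ i, φ (theta P i) ≠ 0) ∧
  (∀ j, φ (algebraMap S (BRing P) (zvar k d S j)) ≠ 0)

/-- The order of an arc: the minimum of the `t`-adic orders of the `φ(θ_i)` and the
`φ(z_j)`. -/
def arcOrd (P : Presentation k d S) {K : Type} [Field K] [Algebra k K]
    (φ : BRing P →ₐ[k] PowerSeries K) : ℕ :=
  sInf ((Set.range fun i => tOrd (φ (theta P i))) ∪
    (Set.range fun j => tOrd (φ (algebraMap S (BRing P) (zvar k d S j)))))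

/-- The contact algebra `G^{(1)}_{X_0,φ}`: the Rees algebra over `K⟦t⟧` generated by the
`φ(θ_i) W` together with all `φ(g) W^l` for `g W^l` a homogeneous element of `G_X^{(d)}`
with `φ(g) ≠ 0`. -/
def contactAlg (P : Presentation k d S) (D : Fin d → Derivation k S S)
    {K : Type} [Field K] [Algebra k K] (φ : BRing P →ₐ[k] PowerSeries K) :
    Subalgebra (PowerSeries K) (Polynomial (PowerSeries K)) :=
  Algebra.adjoin (PowerSeries K)
    ((Set.range fun i => (Polynomial.C (φ (theta P i)) * Polynomial.X :
        Polynomial (PowerSeries K))) ∪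
      {p : Polynomial (PowerSeries K) | ∃ (g : S) (l : ℕ),
        (Polynomial.C g * Polynomial.X ^ l : Polynomial S) ∈ elimAlg P D ∧
        φ (algebraMap S (BRing P) g) ≠ 0 ∧
        p = Polynomial.C (φ (algebraMap S (BRing P) g)) * Polynomial.X ^ l})

/-- The order of contact `r_{X,φ}` of the arc `φ` with `Max mult(X)`: the order of the
contact algebra at the closed point of `K⟦t⟧`. -/
def rOrd (P : Presentation k d S) (D : Fin d → Derivation k S S)
    {K : Type} [Field K] [Algebra k K] (φ : BRing P →ₐ[k] PowerSeries K) : ℝ≥0∞ :=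
  reesOrder (tId K) (contactAlg P D φ)

/-- The persistance `ρ_{X,φ}`: the least number of transforms of the contact algebra
(i.e. of point blow-ups directed by `φ`) needed to make the closed point leave the
singular locus, that is, to lower the Nash multiplicity. -/
def rho (P : Presentation k d S) (D : Fin d → Derivation k S S)
    {K : Type} [Field K] [Algebra k K] (φ : BRing P →ₐ[k] PowerSeries K) : ℕ :=
  persist (tId K) (PowerSeries.X : PowerSeries K) (contactAlg P D φ)


/-- `π`-adic expansion of elements of a ring with a coefficient field. -/
theorem exists_expansion {V K : Type*} [CommRing V] [IsDomain V] [Field K]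
    (ι : K →+* V) (r : V →+* K) (hr : ∀ c, r (ι c) = c) (π : V) (hπ : π ≠ 0)
    (hker : ∀ a, r a = 0 → π ∣ a) (hrπ : r π = 0)
    (hinf : ∀ a, (∀ n : ℕ, π ^ n ∣ a) → a = 0) :
    ∃ Φ : V →+* PowerSeries K, Function.Injective Φ ∧ (∀ c, Φ (ι c) = PowerSeries.C c) ∧
      ∀ a, PowerSeries.constantCoeff (Φ a) = r a := by
  have hT : ∀ a : V, ∃ b, a = ι (r a) + π * b := by
    intro a
    obtain ⟨b, hb⟩ := hker (a - ι (r a)) (by simp [hr])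
    exact ⟨b, by rw [← hb]; ring⟩
  choose T hT using hT
  have huniq : ∀ a b c, a = ι c + π * b → T a = b := by
    intro a b c h
    have h1 : r a = c := by rw [h]; simp [hr, hrπ]
    have h2 := hT a
    rw [h1] at h2
    exact mul_left_cancel₀ hπ (add_left_cancel (h2.symm.trans h))
  have hTadd : ∀ a b, T (a + b) = T a + T b := by
    intro a b
    apply huniq _ _ (r a + r b)
    conv_lhs => rw [hT a, hT b]
    rw [map_add]; ring
  have hTι : ∀ c, T (ι c) = 0 := fun c => huniq _ _ c (by simp)
  have hTmul : ∀ a b, T (a * b) = ι (r a) * T b + T a * b := by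
    intro a b
    apply huniq _ _ (r a * r b)
    have h1 := hT a
    have h2 := hT b
    rw [map_mul]
    linear_combination b * h1 + ι (r a) * h2
  let c : ℕ → V → K := fun n => Nat.rec (fun a => r a) (fun _ g a => g (T a)) n
  have c0 : ∀ a, c 0 a = r a := fun _ => rfl
  have cs : ∀ n a, c (n + 1) a = c n (T a) := fun _ _ => rfl
  have cadd : ∀ n a b, c n (a + b) = c n a + c n b := by
    intro n
    induction n with
    | zero => intro a b; simp [c0]
    | succ n ih => intro a b; rw [cs, hTadd, ih, cs, cs]
  have czero : ∀ n, c n 0 = 0 := by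
    intro n
    have := cadd n 0 0
    simpa using this
  have cι : ∀ n x, c (n + 1) (ι x) = 0 := by
    intro n x
    rw [cs, hTι, czero]
  let Φ : V → PowerSeries K := fun a => PowerSeries.mk fun n => c n a
  have Φc : ∀ a n, PowerSeries.coeff n (Φ a) = c n a := fun a n => PowerSeries.coeff_mk _ _
  have Φι : ∀ x, Φ (ι x) = PowerSeries.C x := by
    intro x
    ext n
    rw [Φc, PowerSeries.coeff_C]
    cases n with
    | zero => simp [c0, hr]
    | succ n => simp [cι]
  have Φrec : ∀ a, Φ a = PowerSeries.C (r a) + PowerSeries.X * Φ (T a) := by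
    intro a
    ext n
    cases n with
    | zero => simp [Φc, c0]
    | succ n => simp [Φc, cs, PowerSeries.coeff_succ_X_mul]
  have Φadd : ∀ a b, Φ (a + b) = Φ a + Φ b := by
    intro a b; ext n; simp [Φc, cadd]
  have Φmulι : ∀ n x b, c n (ι x * b) = x * c n b := by
    intro n
    induction n with
    | zero => intro x b; simp [c0, hr]
    | succ n ih => intro x b; rw [cs, hTmul, hTι, hr, zero_mul, add_zero, ih, cs]
  have Φmul' : ∀ n a b, PowerSeries.coeff n (Φ (a * b)) = PowerSeries.coeff n (Φ a * Φ b) := by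
    intro n
    induction n with
    | zero =>
      intro a b
      simp only [PowerSeries.coeff_zero_eq_constantCoeff, map_mul]
      simp only [← PowerSeries.coeff_zero_eq_constantCoeff_apply, Φc, c0, map_mul]
    | succ n ih =>
      intro a b
      rw [Φc, cs, hTmul, cadd, Φmulι, ← Φc (T a * b), ih, Φrec a, add_mul, map_add,
        PowerSeries.coeff_C_mul, Φc, cs, mul_assoc, PowerSeries.coeff_succ_X_mul]
  have Φmul : ∀ a b, Φ (a * b) = Φ a * Φ b := fun a b => PowerSeries.ext fun n => Φmul' n a b
  let Ψ : V →+* PowerSeries K :=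
    { toFun := Φ
      map_one' := by
        have := Φι 1
        simpa using this
      map_mul' := Φmul
      map_zero' := by
        have := Φι 0
        simpa using this
      map_add' := Φadd }
  refine ⟨Ψ, ?_, Φι, fun a => ?_⟩
  · rw [injective_iff_map_eq_zero]
    intro a ha
    apply hinf
    have ha' : Φ a = 0 := ha
    have key : ∀ n : ℕ, ∀ a, Φ a = 0 → π ^ n ∣ a := by
      intro n
      induction n with
      | zero => intro a _; simp
      | succ n ih =>
        intro a ha
        have h0 : r a = 0 := by
          have := Φc a 0
          rw [ha] at this
          simpa [c0] using this.symm
        have h1 : Φ (T a) = 0 := by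
          ext m
          have := Φc a (m + 1)
          rw [ha] at this
          rw [Φc, ← cs, ← this]; simp
        have h2 := hT a
        rw [h0, map_zero, zero_add] at h2
        rw [h2, pow_succ']
        exact mul_dvd_mul_left _ (ih _ h1)
    exact fun n => key n a ha'
  · rw [← PowerSeries.coeff_zero_eq_constantCoeff_apply]
    exact Φc a 0

theorem exists_dedekind_aux (F Ω : Type) {R S B : Type} [CommRing R]
    [IsDedekindDomain R] [Field F] [CharZero F] [Algebra R F] [IsFractionRing R F]
    [Field Ω] [Algebra F Ω] [Algebra R Ω] [IsScalarTower R F Ω] [IsAlgClosed Ω]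
    [Algebra.IsAlgebraic F Ω]
    [CommRing S] [IsDomain S] [CommRing B] [IsDomain B] [Algebra S B] [Module.Finite S B]
    (hinj : Function.Injective (algebraMap S B))
    (ψ : S →+* R) (hψ : Function.Injective ψ) :
    ∃ (A : Type) (_ : CommRing A) (_ : IsDomain A) (_ : IsDedekindDomain A) (_ : Algebra R A)
      (g : B →+* A), Algebra.IsIntegral R A ∧ Function.Injective (algebraMap R A) ∧
      ∀ s, g (algebraMap S B s) = algebraMap R A (ψ s) := by
  have hRΩ : Function.Injective (algebraMap R Ω) := by
    rw [IsScalarTower.algebraMap_eq R F Ω]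
    exact (algebraMap F Ω).injective.comp (IsFractionRing.injective R F)
  let : Algebra S Ω := ((algebraMap R Ω).comp ψ).toAlgebra
  have hSΩ : ∀ s, algebraMap S Ω s = algebraMap R Ω (ψ s) := fun s => rfl
  have hSΩi : Function.Injective (algebraMap S Ω) := hRΩ.comp hψ
  have : FaithfulSMul S Ω := (faithfulSMul_iff_algebraMap_injective S Ω).2 hSΩi
  have : FaithfulSMul S B := (faithfulSMul_iff_algebraMap_injective S B).2 hinj
  have : Algebra.IsAlgebraic S B := inferInstance
  let f : B →ₐ[S] Ω := IsAlgClosed.lift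
  obtain ⟨T, hT⟩ := (inferInstance : Algebra.FiniteType S B).out
  let L := IntermediateField.adjoin F (f '' (T : Set B))
  have : Finite (f '' (T : Set B)) := (T.finite_toSet.image f).to_subtype
  have : FiniteDimensional F L :=
    IntermediateField.finiteDimensional_adjoin fun x _ => Algebra.IsIntegral.isIntegral x
  have : Algebra.IsSeparable F L := inferInstance
  have hfL : ∀ b, f b ∈ L := by
    intro b
    have hb : b ∈ Algebra.adjoin S (T : Set B) := by rw [hT]; trivial
    induction hb using Algebra.adjoin_induction with
    | mem x hx => exact IntermediateField.subset_adjoin F _ ⟨x, hx, rfl⟩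
    | algebraMap s =>
      rw [AlgHom.commutes, hSΩ, IsScalarTower.algebraMap_apply R F Ω]
      exact IntermediateField.algebraMap_mem _ _
    | add x y _ _ hx hy => rw [map_add]; exact add_mem hx hy
    | mul x y _ _ hx hy => rw [map_mul]; exact mul_mem hx hy
  have hfint : ∀ b, IsIntegral R (f b) := by
    intro b
    obtain ⟨q, hq, hq0⟩ := Algebra.IsIntegral.isIntegral (R := S) b
    refine ⟨q.map ψ, hq.map _, ?_⟩
    rw [Polynomial.eval₂_map]
    have := congrArg f hq0
    rw [map_zero, ← AlgHom.coe_toRingHom, Polynomial.hom_eval₂] at this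
    rw [← this]
    congr 1
    ext s
    simp [hSΩ]
  have : IsScalarTower R L Ω := .of_algebraMap_eq fun x => by
    rw [IsScalarTower.algebraMap_apply R F Ω, IsScalarTower.algebraMap_apply R F L]; rfl
  let A := integralClosure R L
  have : IsDedekindDomain A := integralClosure.isDedekindDomain R F L
  let g₀ : B →+* L := f.toRingHom.codRestrict L.toSubring hfL
  have hg₀ : ∀ b, (g₀ b : Ω) = f b := fun b => rfl
  have hg₀int : ∀ b, g₀ b ∈ A.toSubring := by
    intro b
    show IsIntegral R (g₀ b)
    have := hfint b
    rw [← hg₀] at this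
    exact (isIntegral_algebraMap_iff (A := L) (B := Ω) Subtype.val_injective).1 this
  let g : B →+* A := g₀.codRestrict A.toSubring hg₀int
  have hgs : ∀ s, g (algebraMap S B s) = algebraMap R A (ψ s) := by
    intro s
    apply Subtype.ext
    apply Subtype.ext
    show f (algebraMap S B s) = _
    rw [AlgHom.commutes, hSΩ]
    rfl
  have hRA : Function.Injective (algebraMap R A) := by
    intro x y hxy
    apply hRΩ
    have h1 : (((algebraMap R A x : A) : L) : Ω) = ((algebraMap R A y : A) : L) := by rw [hxy]
    exact h1
  exact ⟨A, inferInstance, inferInstance, inferInstance, inferInstance, g, inferInstance, hRA, hgs⟩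

theorem exists_dedekind {R S B : Type} [CommRing R]
    [IsDedekindDomain R] [CharZero R]
    [CommRing S] [IsDomain S] [CommRing B] [IsDomain B] [Algebra S B] [Module.Finite S B]
    (hinj : Function.Injective (algebraMap S B))
    (ψ : S →+* R) (hψ : Function.Injective ψ) :
    ∃ (A : Type) (_ : CommRing A) (_ : IsDomain A) (_ : IsDedekindDomain A) (_ : Algebra R A)
      (g : B →+* A), Algebra.IsIntegral R A ∧ Function.Injective (algebraMap R A) ∧
      ∀ s, g (algebraMap S B s) = algebraMap R A (ψ s) := by
  have : CharZero (FractionRing R) :=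
    charZero_of_injective_algebraMap (IsFractionRing.injective R (FractionRing R))
  exact exists_dedekind_aux (FractionRing R) (AlgebraicClosure (FractionRing R)) hinj ψ hψ

theorem exists_lift_series {K S B : Type} [Field K] [IsAlgClosed K] [CharZero K]
    [CommRing S] [IsDomain S] [CommRing B] [IsDomain B] [Algebra S B] [Module.Finite S B]
    (hinj : Function.Injective (algebraMap S B))
    (ψ : S →+* PowerSeries K) (hψ : Function.Injective ψ) :
    ∃ (Φ : B →+* PowerSeries K) (τ : PowerSeries K →+* PowerSeries K),
      Function.Injective τ ∧ (∀ c, τ (PowerSeries.C c) = PowerSeries.C c) ∧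
      PowerSeries.constantCoeff (τ PowerSeries.X) = 0 ∧
      ∀ s, Φ (algebraMap S B s) = τ (ψ s) := by
  have : CharZero (PowerSeries K) :=
    charZero_of_injective_ringHom (PowerSeries.C_injective (R := K))
  obtain ⟨A, _, _, _, _, g, hAint, hRA, hgs⟩ := exists_dedekind hinj ψ hψ
  let R := PowerSeries K
  obtain ⟨P, hP⟩ := Ideal.exists_maximal A
  have hcomap : P.comap (algebraMap R A) = IsLocalRing.maximalIdeal R := by
    apply IsLocalRing.eq_maximalIdeal
    exact Ideal.isMaximal_comap_of_isIntegral_of_isMaximal P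
  have hXP : algebraMap R A PowerSeries.X ∈ P := by
    rw [← Ideal.mem_comap, hcomap, IsLocalRing.mem_maximalIdeal, mem_nonunits_iff,
      PowerSeries.isUnit_iff_constantCoeff]
    simp
  have hPbot : P ≠ ⊥ := by
    rintro rfl
    rw [Ideal.mem_bot, map_eq_zero_iff _ hRA] at hXP
    exact PowerSeries.X_ne_zero hXP
  let ιA : K →+* A := (algebraMap R A).comp PowerSeries.C
  let : Algebra K (A ⧸ P) := ((Ideal.Quotient.mk P).comp ιA).toAlgebra
  have hfac : (Ideal.Quotient.mk P).comp (algebraMap R A) =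
      (algebraMap K (A ⧸ P)).comp PowerSeries.constantCoeff := by
    ext p
    show Ideal.Quotient.mk P (algebraMap R A p) =
      Ideal.Quotient.mk P (algebraMap R A (PowerSeries.C (PowerSeries.constantCoeff p)))
    rw [Ideal.Quotient.eq, ← map_sub]
    obtain ⟨q, hq⟩ : (PowerSeries.X : R) ∣ p - PowerSeries.C (PowerSeries.constantCoeff p) := by
      rw [PowerSeries.X_dvd_iff]; simp
    rw [hq, map_mul]
    exact P.mul_mem_right _ hXP
  have hint : ((Ideal.Quotient.mk P).comp (algebraMap R A)).IsIntegral := by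
    apply RingHom.IsIntegral.trans
    · exact Algebra.IsIntegral.isIntegral
    · exact RingHom.isIntegral_of_surjective _ Ideal.Quotient.mk_surjective
  rw [hfac] at hint
  have hint2 := RingHom.IsIntegral.tower_top _ _ hint
  have : Algebra.IsIntegral K (A ⧸ P) := ⟨hint2⟩
  have : P.IsPrime := hP.isPrime
  have hbij := IsAlgClosed.algebraMap_bijective_of_isIntegral (k := K) (K := A ⧸ P)
  let E := RingEquiv.ofBijective (algebraMap K (A ⧸ P)) hbij
  let rA : A →+* K := E.symm.toRingHom.comp (Ideal.Quotient.mk P)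
  have hrA : ∀ a, rA a = 0 ↔ a ∈ P := by
    intro a
    show E.symm (Ideal.Quotient.mk P a) = 0 ↔ _
    rw [map_eq_zero_iff _ E.symm.injective, Ideal.Quotient.eq_zero_iff_mem]
  have hrAι : ∀ c, rA (ιA c) = c := fun c => E.symm_apply_apply c
  let V := Localization.AtPrime P
  have : IsDiscreteValuationRing V :=
    IsLocalization.AtPrime.isDiscreteValuationRing_of_dedekind_domain A hPbot V
  have hunit : ∀ y : P.primeCompl, IsUnit (rA y) := by
    intro y
    rw [isUnit_iff_ne_zero, Ne, hrA]
    exact y.2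
  let r : V →+* K := IsLocalization.lift (M := P.primeCompl) hunit
  have hrr : ∀ a, r (algebraMap A V a) = rA a := fun a => IsLocalization.lift_eq _ _
  obtain ⟨π, hπ⟩ := IsDiscreteValuationRing.exists_irreducible V
  have hmax : IsLocalRing.maximalIdeal V = Ideal.span {π} := hπ.maximalIdeal_eq
  have hker : ∀ a, r a = 0 → π ∣ a := by
    intro a ha
    rw [← Ideal.mem_span_singleton, ← hmax, IsLocalRing.mem_maximalIdeal, mem_nonunits_iff]
    intro hu
    exact (hu.map r).ne_zero ha
  have hrπ : r π = 0 := by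
    by_contra hne
    apply hπ.not_isUnit
    set c := r π
    have : r (π - algebraMap A V (ιA c)) = 0 := by rw [map_sub, hrr, hrAι, sub_self]
    have h2 := hker _ this
    have h3 : π ∣ algebraMap A V (ιA c) := by
      have := dvd_sub (dvd_refl π) h2
      simpa using this
    exact isUnit_of_dvd_unit h3
      ((((isUnit_iff_ne_zero.2 hne).map ιA)).map (algebraMap A V))
  obtain ⟨Θ, hΘi, hΘι, hΘr⟩ := exists_expansion ((algebraMap A V).comp ιA) r
    (fun c => by simp only [RingHom.comp_apply]; rw [hrr, hrAι]) π hπ.ne_zero hker hrπ (by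
      intro a ha
      by_contra hne
      obtain ⟨n, hn⟩ := IsDiscreteValuationRing.associated_pow_irreducible hne hπ
      have h1 := (ha (n + 1)).trans hn.dvd
      rw [pow_dvd_pow_iff hπ.ne_zero hπ.not_isUnit] at h1
      omega)
  have hAV : Function.Injective (algebraMap A V) :=
    IsLocalization.injective V P.primeCompl_le_nonZeroDivisors
  refine ⟨(Θ.comp (algebraMap A V)).comp g, (Θ.comp (algebraMap A V)).comp (algebraMap R A),
    (hΘi.comp hAV).comp hRA, hΘι, ?_, ?_⟩
  · show PowerSeries.constantCoeff (Θ (algebraMap A V (algebraMap R A PowerSeries.X))) = 0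
    rw [hΘr, hrr, hrA]
    exact hXP
  · intro s
    show Θ (algebraMap A V (g (algebraMap S B s))) = _
    rw [hgs]
    rfl
theorem mPoly_eq (k : Type) [Field k] (d : ℕ) :
    mPoly k d = MvPolynomial.idealOfVars (Fin d) k := by
  ext p
  have h1 := MvPolynomial.mem_pow_idealOfVars_iff' (σ := Fin d) (R := k) 1 p
  rw [pow_one] at h1
  rw [h1]
  have h2 : MvPolynomial.aeval (fun _ : Fin d => (0 : k)) p = MvPolynomial.constantCoeff p := by
    simp
  show MvPolynomial.aeval (fun _ => (0 : k)) p = 0 ↔ _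
  rw [h2]
  constructor
  · intro h x hx
    have : x = 0 := by
      rw [← Finsupp.degree_eq_zero_iff]; omega
    rw [this]; exact h
  · intro h
    exact h 0 (by simp)

theorem coeff_aeval_line {k K : Type} [Field k] [Field K] [Algebra k K] {d : ℕ} (a : Fin d → K)
    (p : MvPolynomial (Fin d) k) (n : ℕ) :
    PowerSeries.coeff n (MvPolynomial.aeval (fun j => PowerSeries.C (a j) * PowerSeries.X) p) =
      MvPolynomial.aeval a (MvPolynomial.homogeneousComponent n p) := by
  induction p using MvPolynomial.induction_on' with
  | monomial u c =>
    rw [MvPolynomial.homogeneousComponent_of_mem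
      (MvPolynomial.isHomogeneous_monomial c (n := u.degree) rfl)]
    have h1 : MvPolynomial.aeval (fun j => PowerSeries.C (a j) * PowerSeries.X)
        (MvPolynomial.monomial u c) =
        PowerSeries.C (MvPolynomial.aeval a (MvPolynomial.monomial u c)) *
          (PowerSeries.X : PowerSeries K) ^ u.degree := by
      rw [MvPolynomial.aeval_monomial, MvPolynomial.aeval_monomial, map_mul]
      rw [Finsupp.prod_fintype _ _ (by simp), Finsupp.prod_fintype _ _ (by simp)]
      simp only [mul_pow, Finset.prod_mul_distrib, map_prod, map_pow, Finset.prod_pow_eq_pow_sum,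
        Finsupp.degree_eq_sum]
      rw [mul_assoc, PowerSeries.algebraMap_apply]
    rw [h1, PowerSeries.coeff_C_mul, PowerSeries.coeff_X_pow]
    split_ifs <;> simp
  | add p q hp hq => simp only [map_add, hp, hq]

theorem X_pow_dvd_line_iff {k K : Type} [Field k] [Field K] [Algebra k K] {d : ℕ} (a : Fin d → K)
    (ha : AlgebraicIndependent k a) (p : MvPolynomial (Fin d) k) (n : ℕ) :
    PowerSeries.X ^ n ∣ MvPolynomial.aeval (fun j => PowerSeries.C (a j) * PowerSeries.X) p ↔
      p ∈ mPoly k d ^ n := by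
  rw [mPoly_eq, MvPolynomial.mem_pow_idealOfVars_iff', PowerSeries.X_pow_dvd_iff]
  simp only [coeff_aeval_line]
  constructor
  · intro h x hx
    have h1 := h _ hx
    rw [map_eq_zero_iff _ ha] at h1
    have h2 := MvPolynomial.coeff_homogeneousComponent x.degree p x
    rw [h1] at h2
    simpa using h2.symm
  · intro h m hm
    have : MvPolynomial.homogeneousComponent m p = 0 := by
      ext x
      rw [MvPolynomial.coeff_homogeneousComponent]
      split_ifs with hx
      · rw [h x (by omega)]; simp
      · simp
    rw [this, map_zero]

/-- The generic line through the origin. -/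
theorem exists_generic_line (k : Type) [Field k] (d : ℕ)
    (S : Type) [CommRing S] [Algebra (MvPolynomial (Fin d) k) S]
    [Algebra k S] [IsScalarTower k (MvPolynomial (Fin d) k) S] [IsSLoc k d S]
    {K : Type} [Field K] [Algebra k K] (a : Fin d → K) (ha : AlgebraicIndependent k a) :
    ∃ ψ : S →+* PowerSeries K, Function.Injective ψ ∧
      (∀ c : k, ψ (algebraMap k S c) = PowerSeries.C (algebraMap k K c)) ∧
      (∀ j, ψ (zvar k d S j) = PowerSeries.C (a j) * PowerSeries.X) ∧
      ∀ s n, s ∈ mS k d S ^ n ↔ PowerSeries.X ^ n ∣ ψ s := by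
  let ψ₀ : MvPolynomial (Fin d) k →ₐ[k] PowerSeries K :=
    MvPolynomial.aeval (fun j => PowerSeries.C (a j) * PowerSeries.X)
  have hψ₀ : ∀ p n, PowerSeries.X ^ n ∣ ψ₀ p ↔ p ∈ mPoly k d ^ n :=
    fun p n => X_pow_dvd_line_iff a ha p n
  have hu : ∀ y : (mPoly k d).primeCompl, IsUnit (ψ₀.toRingHom y) := by
    intro y
    rw [PowerSeries.isUnit_iff_constantCoeff, isUnit_iff_ne_zero, Ne, ← PowerSeries.X_dvd_iff]
    have := hψ₀ y 1
    rw [pow_one, pow_one] at this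
    intro h
    exact y.2 (this.1 h)
  let ψ : S →+* PowerSeries K := IsLocalization.lift (M := (mPoly k d).primeCompl) hu
  have hψ : ∀ p, ψ (algebraMap _ S p) = ψ₀ p := fun p => IsLocalization.lift_eq _ _
  have hfrac : ∀ s : S, ∃ (p : MvPolynomial (Fin d) k) (y : (mPoly k d).primeCompl),
      s * algebraMap _ S (y : MvPolynomial (Fin d) k) = algebraMap _ S p := by
    intro s
    obtain ⟨⟨p, y⟩, h⟩ := IsLocalization.surj (mPoly k d).primeCompl s
    exact ⟨p, y, h⟩
  refine ⟨ψ, ?_, ?_, ?_, ?_⟩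
  · rw [injective_iff_map_eq_zero]
    intro s hs
    obtain ⟨p, y, h⟩ := hfrac s
    have h1 : ψ₀ p = 0 := by rw [← hψ, ← h, map_mul, hs, zero_mul]
    have h2 : p = 0 := by
      rw [← MvPolynomial.sum_homogeneousComponent p]
      apply Finset.sum_eq_zero
      intro i _
      have := coeff_aeval_line a p i
      rw [← map_eq_zero_iff _ ha, ← this]
      show PowerSeries.coeff i (ψ₀ p) = 0
      rw [h1, map_zero]
    rw [h2, map_zero] at h
    exact (IsLocalization.map_units S y).mul_left_eq_zero.1 h
  · intro c
    rw [IsScalarTower.algebraMap_apply k (MvPolynomial (Fin d) k) S, hψ, AlgHom.commutes,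
      PowerSeries.algebraMap_apply]
  · intro j
    rw [zvar, hψ]
    exact MvPolynomial.aeval_X _ _
  · intro s n
    constructor
    · have : mS k d S ^ n ≤ (Ideal.span {(PowerSeries.X : PowerSeries K) ^ n}).comap ψ := by
        rw [mS, ← Ideal.map_pow, Ideal.map_le_iff_le_comap]
        intro p hp
        rw [Ideal.mem_comap, Ideal.mem_comap, hψ, Ideal.mem_span_singleton, hψ₀]
        exact hp
      intro hs
      have := this hs
      rwa [Ideal.mem_comap, Ideal.mem_span_singleton] at this
    · intro hs
      obtain ⟨p, y, h⟩ := hfrac s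
      have h1 : p ∈ mPoly k d ^ n := by
        rw [← hψ₀, ← hψ, ← h, map_mul]
        exact hs.mul_right _
      have h2 : algebraMap _ S p ∈ mS k d S ^ n := by
        rw [mS, ← Ideal.map_pow]
        exact Ideal.mem_map_of_mem _ h1
      rw [← h] at h2
      exact ((mS k d S ^ n).mul_unit_mem_iff_mem (IsLocalization.map_units S y)).1 h2

theorem exists_generic_arc (k : Type) [Field k] [CharZero k] (d : ℕ)
    (S : Type) [CommRing S] [IsDomain S] [Algebra (MvPolynomial (Fin d) k) S]
    [Algebra k S] [IsScalarTower k (MvPolynomial (Fin d) k) S] [IsSLoc k d S]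
    (B : Type) [CommRing B] [IsDomain B] [Algebra S B] [Algebra k B] [IsScalarTower k S B]
    [Module.Finite S B] (hinj : Function.Injective (algebraMap S B)) (N : ℕ) (hN : 1 ≤ N) :
    ∃ (K : Type) (_ : Field K) (_ : Algebra k K) (φ : B →ₐ[k] PowerSeries K) (e : ℕ), 1 ≤ e ∧
      (∀ s n, s ∈ mS k d S ^ n → PowerSeries.X ^ (e * N * n) ∣ φ (algebraMap S B s)) ∧
      (∀ j, ∃ u : PowerSeries K, IsUnit u ∧
        φ (algebraMap S B (zvar k d S j)) = u * PowerSeries.X ^ (e * N)) ∧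
      ∀ s, s ≠ 0 → ∃ (n : ℕ) (u : PowerSeries K), IsUnit u ∧ s ∈ mS k d S ^ n ∧ s ∉ mS k d S ^ (n + 1) ∧
        φ (algebraMap S B s) = u * PowerSeries.X ^ (e * N * n) := by
  let K := AlgebraicClosure (FractionRing (MvPolynomial (Fin d) k))
  let a : Fin d → K := fun j => algebraMap (MvPolynomial (Fin d) k) K (MvPolynomial.X j)
  have hKinj : Function.Injective (algebraMap (MvPolynomial (Fin d) k) K) := by
    rw [IsScalarTower.algebraMap_eq _ (FractionRing (MvPolynomial (Fin d) k)) K]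
    exact (algebraMap (FractionRing (MvPolynomial (Fin d) k)) K).injective.comp
      (IsFractionRing.injective _ _)
  have ha : AlgebraicIndependent k a := by
    have h := (MvPolynomial.algebraicIndependent_X (Fin d) k).map'
      (f := IsScalarTower.toAlgHom k (MvPolynomial (Fin d) k) K) hKinj
    exact h
  have : CharZero K := charZero_of_injective_algebraMap (algebraMap k K).injective
  obtain ⟨ψ, hψi, hψk, hψz, hψm⟩ := exists_generic_line k d S a ha
  obtain ⟨Φ, τ, hτi, hτC, hτX, hΦ⟩ := exists_lift_series hinj ψ hψi
  have hN0 : N ≠ 0 := by omega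
  let σ : PowerSeries K →ₐ[K] PowerSeries K := PowerSeries.expand N hN0
  have hfac : ∀ f : PowerSeries K, f ≠ 0 → ∃ n u, IsUnit u ∧ f = u * PowerSeries.X ^ n := by
    intro f hf
    obtain ⟨n, hn⟩ := IsDiscreteValuationRing.associated_pow_irreducible hf PowerSeries.X_irreducible
    obtain ⟨u, hu⟩ := hn.symm
    exact ⟨n, u, u.isUnit, by rw [← hu, mul_comm]⟩
  have hτX0 : τ PowerSeries.X ≠ 0 := by
    rw [Ne, map_eq_zero_iff _ hτi]; exact PowerSeries.X_ne_zero
  obtain ⟨e, v, hv, hev⟩ := hfac _ hτX0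
  have he : 1 ≤ e := by
    by_contra h
    have : e = 0 := by omega
    rw [this, pow_zero, mul_one] at hev
    rw [← hev, PowerSeries.isUnit_iff_constantCoeff, hτX] at hv
    exact not_isUnit_zero hv
  have hσX : ∀ m, σ (PowerSeries.X ^ m) = PowerSeries.X ^ (N * m) := by
    intro m
    rw [map_pow, PowerSeries.expand_X, ← pow_mul]
  have hστ : σ (τ PowerSeries.X) = σ v * PowerSeries.X ^ (e * N) := by
    rw [hev, map_mul, hσX, mul_comm N e]
  have hσv : IsUnit (σ v) := hv.map σ
  have hk : ∀ c : k, σ (Φ (algebraMap k B c)) = algebraMap k (PowerSeries K) c := by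
    intro c
    rw [IsScalarTower.algebraMap_apply k S B, hΦ, hψk, hτC, PowerSeries.expand_C,
      PowerSeries.algebraMap_apply]
  let φ : B →ₐ[k] PowerSeries K := { σ.toRingHom.comp Φ with commutes' := hk }
  have hφ : ∀ s, φ (algebraMap S B s) = σ (τ (ψ s)) := by
    intro s
    rw [← hΦ]; rfl
  refine ⟨K, inferInstance, inferInstance, φ, e, he, ?_, ?_, ?_⟩
  · intro s n hs
    obtain ⟨q, hq⟩ := (hψm s n).1 hs
    rw [hφ, hq, map_mul, map_mul, map_pow, map_pow, hστ, mul_pow, ← pow_mul]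
    exact (Dvd.intro_left _ rfl).mul_right _
  · intro j
    refine ⟨PowerSeries.C (a j) * σ v, ?_, ?_⟩
    · refine IsUnit.mul ?_ hσv
      rw [PowerSeries.isUnit_iff_constantCoeff, PowerSeries.constantCoeff_C]
      exact isUnit_iff_ne_zero.2 (ha.ne_zero j)
    · rw [hφ, hψz, map_mul, map_mul, hτC, PowerSeries.expand_C, hστ, mul_assoc]
  · intro s hs
    have h0 : ψ s ≠ 0 := by rwa [Ne, map_eq_zero_iff _ hψi]
    obtain ⟨n, u, hu, hn⟩ := hfac _ h0
    refine ⟨n, σ (τ u) * σ v ^ n, ?_, ?_, ?_, ?_⟩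
    · exact ((hu.map τ).map σ).mul (hσv.pow n)
    · rw [hψm, hn]; exact Dvd.intro_left _ rfl
    · rw [hψm, hn, mul_comm, hu.dvd_mul_right,
        pow_dvd_pow_iff PowerSeries.X_ne_zero PowerSeries.X_irreducible.not_isUnit]
      omega
    · rw [hφ, hn, map_mul, map_mul, map_pow, map_pow, hστ, mul_pow, ← pow_mul]
      ring

theorem adicOrder_eq {R : Type*} [CommRing R] {m : Ideal R} {f : R} {n : ℕ}
    (h1 : f ∈ m ^ n) (h2 : f ∉ m ^ (n + 1)) : adicOrder m f = n := by
  apply IsGreatest.csSup_eq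
  refine ⟨h1, fun j hj => ?_⟩
  by_contra hlt
  exact h2 (Ideal.pow_le_pow_right (by omega) hj)

theorem mem_tId_pow {K : Type*} [CommRing K] (n : ℕ) (f : PowerSeries K) :
    f ∈ tId K ^ n ↔ PowerSeries.X ^ n ∣ f := by
  rw [tId, Ideal.span_singleton_pow, Ideal.mem_span_singleton]

theorem X_pow_dvd_unit_mul {K : Type*} [Field K] {u : PowerSeries K} (hu : IsUnit u) (m n : ℕ) :
    PowerSeries.X ^ m ∣ u * PowerSeries.X ^ n ↔ m ≤ n := by
  rw [mul_comm, hu.dvd_mul_right,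
    pow_dvd_pow_iff PowerSeries.X_ne_zero PowerSeries.X_irreducible.not_isUnit]

theorem adicOrder_unit_mul {K : Type*} [Field K] {u : PowerSeries K} (hu : IsUnit u) (n : ℕ) :
    adicOrder (tId K) (u * PowerSeries.X ^ n) = n := by
  apply adicOrder_eq
  · rw [mem_tId_pow, X_pow_dvd_unit_mul hu]
  · rw [mem_tId_pow, X_pow_dvd_unit_mul hu]; omega

theorem exists_unit_mul {K : Type*} [Field K] (f : PowerSeries K) (hf : f ≠ 0) :
    ∃ (n : ℕ) (u : PowerSeries K), IsUnit u ∧ f = u * PowerSeries.X ^ n := by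
  obtain ⟨n, hn⟩ := IsDiscreteValuationRing.associated_pow_irreducible hf PowerSeries.X_irreducible
  obtain ⟨u, hu⟩ := hn.symm
  exact ⟨n, u, u.isUnit, by rw [← hu, mul_comm]⟩

theorem le_adicOrder {K : Type*} [Field K] {f : PowerSeries K} (hf : f ≠ 0) {n : ℕ}
    (h : PowerSeries.X ^ n ∣ f) : n ≤ adicOrder (tId K) f := by
  obtain ⟨m, u, hu, rfl⟩ := exists_unit_mul f hf
  rw [adicOrder_unit_mul hu]
  exact (X_pow_dvd_unit_mul hu _ _).1 h

/-- The subalgebra `⊕ I_l W^l` attached to a multiplicative family of ideals. -/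
def filtSub {R : Type*} [CommRing R] (I : ℕ → Ideal R) (h0 : I 0 = ⊤)
    (hmul : ∀ i j a b, a ∈ I i → b ∈ I j → a * b ∈ I (i + j)) :
    Subalgebra R (Polynomial R) where
  carrier := {p | ∀ l, p.coeff l ∈ I l}
  mul_mem' := by
    intro p q hp hq l
    rw [Polynomial.coeff_mul]
    refine Ideal.sum_mem _ fun x hx => ?_
    rw [← Finset.HasAntidiagonal.mem_antidiagonal.1 hx]
    exact hmul _ _ _ _ (hp _) (hq _)
  add_mem' := by
    intro p q hp hq l
    rw [Polynomial.coeff_add]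
    exact add_mem (hp l) (hq l)
  algebraMap_mem' := by
    intro r l
    rw [Polynomial.algebraMap_apply, Polynomial.coeff_C]
    split_ifs with hl
    · rw [hl, h0]; trivial
    · exact zero_mem _

theorem mem_filtSub {R : Type*} [CommRing R] {I : ℕ → Ideal R} {h0 : I 0 = ⊤}
    {hmul : ∀ i j a b, a ∈ I i → b ∈ I j → a * b ∈ I (i + j)} (p : Polynomial R) :
    p ∈ filtSub I h0 hmul ↔ ∀ l, p.coeff l ∈ I l := Iff.rfl

theorem C_mul_X_pow_mem_filtSub {R : Type*} [CommRing R] {I : ℕ → Ideal R} {h0 : I 0 = ⊤}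
    {hmul : ∀ i j a b, a ∈ I i → b ∈ I j → a * b ∈ I (i + j)} (f : R) (n : ℕ) :
    (C f * X ^ n : Polynomial R) ∈ filtSub I h0 hmul ↔ f ∈ I n := by
  rw [mem_filtSub]
  constructor
  · intro h
    simpa using h n
  · intro h l
    rw [Polynomial.coeff_C_mul_X_pow]
    split_ifs with hl
    · rw [hl]; exact h
    · exact zero_mem _

theorem mem_idealFam {R : Type*} [CommRing R] (G : Subalgebra R (Polynomial R)) (l : ℕ) (f : R) :
    f ∈ idealFam G l ↔ (C f * X ^ l : Polynomial R) ∈ G := by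
  rw [Polynomial.C_mul_X_pow_eq_monomial]
  rfl

theorem mem_transform_iterate {R : Type*} [CommRing R] (T : R) (I : ℕ → Ideal R) (κ l : ℕ) (f : R) :
    f ∈ (transformFam T)^[κ] I l ↔ f * T ^ (l * κ) ∈ I l := by
  induction κ generalizing f with
  | zero => simp
  | succ κ ih =>
    rw [Function.iterate_succ_apply', transformFam, Ideal.mem_colon_span_singleton, ih,
      mul_assoc, ← pow_add, mul_add, mul_one, add_comm l]

theorem X_pow_persist_dvd {K : Type*} [Field K]
    (G : Subalgebra (PowerSeries K) (Polynomial (PowerSeries K))) (f : PowerSeries K) (l : ℕ)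
    (hl : 1 ≤ l) (hf : (C f * X ^ l : Polynomial (PowerSeries K)) ∈ G) :
    PowerSeries.X ^ (persist (tId K) (PowerSeries.X : PowerSeries K) G * l) ∣ f := by
  have key : ∀ κ, κ ≤ persist (tId K) (PowerSeries.X : PowerSeries K) G →
      PowerSeries.X ^ (l * κ) ∣ f := by
    intro κ
    induction κ with
    | zero => intro _; simp
    | succ κ ih =>
      intro hκ
      obtain ⟨g, hg⟩ := ih (by omega)
      have hs := Nat.notMem_of_lt_sInf (show κ < sInf _ from hκ)
      rw [Set.mem_ofPred_eq, not_not] at hs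
      have h1 : g ∈ (transformFam (PowerSeries.X : PowerSeries K))^[κ] (idealFam G) l := by
        rw [mem_transform_iterate, mul_comm, ← hg, mem_idealFam]
        exact hf
      have h2 := hs l hl h1
      rw [mem_tId_pow] at h2
      rw [hg, mul_add, mul_one, pow_add]
      exact mul_dvd_mul_left _ h2
  rw [mul_comm]
  exact key _ le_rfl

theorem le_reesOrder {K : Type*} [Field K]
    (G : Subalgebra (PowerSeries K) (Polynomial (PowerSeries K))) (M : ℕ)
    (h : ∀ f l, 1 ≤ l → (C f * X ^ l : Polynomial (PowerSeries K)) ∈ G →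
      PowerSeries.X ^ (M * l) ∣ f) :
    (M : ℝ≥0∞) ≤ reesOrder (tId K) G := by
  apply le_sInf
  rintro q ⟨f, n, hf, hn, hmem, rfl⟩
  have h1 := le_adicOrder hf (h f n hn hmem)
  rw [ENNReal.le_div_iff_mul_le (Or.inl (by simp; omega)) (Or.inl (by simp))]
  exact_mod_cast h1

theorem derivation_mem_pow {k R : Type*} [CommRing k] [CommRing R] [Algebra k R]
    (D : Derivation k R R) (m : Ideal R) (n : ℕ) : ∀ f ∈ m ^ (n + 1), D f ∈ m ^ n := by
  induction n with
  | zero => intro f _; simp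
  | succ n ih =>
    intro f hf
    rw [pow_succ'] at hf
    induction hf using Submodule.mul_induction_on' with
    | mem_mul_mem a ha b hb =>
      rw [Derivation.leibniz, smul_eq_mul, smul_eq_mul]
      refine add_mem ?_ ?_
      · rw [pow_succ']
        exact Ideal.mul_mem_mul ha (ih b hb)
      · exact Ideal.mul_mem_right _ _ hb
    | add x _ y _ hx hy => rw [map_add]; exact add_mem hx hy

/-- The minimal `m`-adic order ratio of the coefficients bounds the elimination algebra. -/
theorem elim_data {k : Type} [Field k] {d : ℕ}
    {S : Type} [CommRing S] [IsDomain S] [Algebra (MvPolynomial (Fin d) k) S]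
    [Algebra k S] (D : Fin d → Derivation k S S) (P : Presentation k d S)
    (hS : ∀ s : S, s ≠ 0 → ∃ n, s ∈ mS k d S ^ n ∧ s ∉ mS k d S ^ (n + 1)) :
    ∃ (i₀ : Fin P.e) (j₀ ν₀ : ℕ), j₀ ≤ P.b i₀ - 2 ∧ P.Bc i₀ j₀ ≠ 0 ∧ P.Bc i₀ j₀ ∈ mS k d S ^ ν₀ ∧
      P.Bc i₀ j₀ ∉ mS k d S ^ (ν₀ + 1) ∧ P.b i₀ - j₀ ≤ ν₀ ∧
      (∀ (f : S) (l : ℕ), (C f * X ^ l : Polynomial S) ∈ elimAlg P D →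
        f ∈ mS k d S ^ ⌈((ν₀ : ℚ) * (l : ℚ) / ((P.b i₀ - j₀ : ℕ) : ℚ))⌉₊) := by
  let T : Set (Fin P.e × ℕ) := {x | x.2 ≤ P.b x.1 - 2 ∧ P.Bc x.1 x.2 ≠ 0}
  have hfin : T.Finite := by
    apply Set.Finite.subset
      (Set.Finite.biUnion (Set.finite_univ (α := Fin P.e)) (t := fun i => ({i} : Set (Fin P.e)) ×ˢ Set.Iic (P.b i - 2))
        (fun i _ => (Set.finite_singleton i).prod (Set.finite_Iic _)))
    rintro ⟨i, j⟩ ⟨h, _⟩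
    rw [Set.mem_iUnion₂]
    exact ⟨i, trivial, Set.mem_singleton i, h⟩
  have hne : T.Nonempty := by
    obtain ⟨i, j, h1, h2⟩ := P.hnz
    exact ⟨(i, j), h1, h2⟩
  obtain ⟨⟨i₀, j₀⟩, ⟨hj₀, hB₀⟩, hmin⟩ := Set.exists_min_image T
    (fun x => (adicOrder (mS k d S) (P.Bc x.1 x.2) : ℚ) / (P.b x.1 - x.2 : ℕ)) hfin hne
  simp only at hj₀ hB₀ hmin
  obtain ⟨ν₀, hν1, hν2⟩ := hS _ hB₀
  have hle : P.b i₀ - j₀ ≤ ν₀ := by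
    by_contra hlt
    exact hν2 (Ideal.pow_le_pow_right (by omega) (P.hmem i₀ j₀ hj₀))
  refine ⟨i₀, j₀, ν₀, hj₀, hB₀, hν1, hν2, hle, ?_⟩
  rw [adicOrder_eq hν1 hν2] at hmin
  have hb := P.hb i₀
  have hn0 : 2 ≤ P.b i₀ - j₀ := by omega
  generalize hn₀ : P.b i₀ - j₀ = n₀ at *
  have hn0' : (0 : ℚ) < n₀ := by exact_mod_cast (by omega : 0 < n₀)
  let c : ℕ → ℕ := fun l => ⌈(ν₀ * l / n₀ : ℚ)⌉₊
  have c0 : c 0 = 0 := by simp [c]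
  have cadd : ∀ i j, c (i + j) ≤ c i + c j := by
    intro i j
    refine le_trans (le_of_eq ?_) (Nat.ceil_add_le _ _)
    simp only [c]
    congr 1
    push_cast
    ring
  have csucc : ∀ l, c l + 1 ≤ c (l + 1) := by
    intro l
    simp only [c]
    rw [← Nat.ceil_add_one (by positivity)]
    apply Nat.ceil_mono
    have : (1 : ℚ) ≤ ν₀ / n₀ := by
      rw [le_div_iff₀ hn0', one_mul]; exact_mod_cast hle
    push_cast
    rw [mul_add, add_div, mul_one]
    linarith
  let H := filtSub (fun l => mS k d S ^ c l) (by simp [c0]) (by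
    intro i j a b ha hb
    have := Ideal.mul_mem_mul ha hb
    rw [← pow_add] at this
    exact Ideal.pow_le_pow_right (cadd i j) this)
  have hHle : elimAlg P D ≤ H := by
    apply sInf_le
    refine ⟨?_, ?_, ?_, ?_⟩
    · rintro p ⟨i, j, hj, rfl⟩
      show _ ∈ H
      rw [C_mul_X_pow_mem_filtSub]
      by_cases hz : P.Bc i j = 0
      · rw [hz]; exact zero_mem _
      · obtain ⟨n, h1, h2⟩ := hS _ hz
        have h3 := hmin (i, j) ⟨hj, hz⟩
        simp only at h3
        rw [adicOrder_eq h1 h2] at h3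
        have hbi := P.hb i
        have hpos : (0 : ℚ) < (P.b i - j : ℕ) := by exact_mod_cast (by omega : 0 < P.b i - j)
        refine Ideal.pow_le_pow_right ?_ h1
        apply Nat.ceil_le.2
        rw [div_le_div_iff₀ hn0' hpos] at h3
        rw [div_le_iff₀ hn0']
        exact h3
    · intro p hp n
      rw [C_mul_X_pow_mem_filtSub]
      exact hp n
    · intro f l _ hf
      rw [C_mul_X_pow_mem_filtSub] at hf ⊢
      exact Ideal.pow_le_pow_right (by have := csucc l; omega) hf
    · intro f l j hf
      rw [C_mul_X_pow_mem_filtSub] at hf ⊢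
      exact derivation_mem_pow _ _ _ _ (Ideal.pow_le_pow_right (csucc l) hf)
  intro f l hf
  have := hHle hf
  rwa [C_mul_X_pow_mem_filtSub] at this

theorem elimAlg_gen_mem {k : Type} [Field k] {d : ℕ}
    {S : Type} [CommRing S] [IsDomain S] [Algebra (MvPolynomial (Fin d) k) S]
    [Algebra k S] (D : Fin d → Derivation k S S) (P : Presentation k d S) (i : Fin P.e) (j : ℕ)
    (hj : j ≤ P.b i - 2) :
    (C (P.Bc i j) * X ^ (P.b i - j) : Polynomial S) ∈ elimAlg P D := by
  rw [elimAlg, diffClosure, Algebra.mem_sInf]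
  rintro G ⟨hG, _⟩
  exact hG ⟨i, j, hj, rfl⟩

theorem Bc_zero_ne_zero {k : Type} [Field k] {d : ℕ}
    {S : Type} [CommRing S] [IsDomain S] [Algebra (MvPolynomial (Fin d) k) S]
    [Algebra k S] (P : Presentation k d S) (i : Fin P.e) : P.Bc i 0 ≠ 0 := by
  intro h0
  have hb := P.hb i
  have hX : (X : Polynomial S) ∣ minPolyOf (P.b i) (P.Bc i) := by
    rw [minPolyOf]
    refine dvd_add (dvd_pow_self _ (by omega)) (Finset.dvd_sum fun j _ => ?_)
    rcases Nat.eq_zero_or_pos j with rfl | hj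
    · rw [h0]; simp
    · exact (dvd_pow_self _ (by omega)).mul_left _
  obtain ⟨q, hq⟩ := hX
  have hmonic : (minPolyOf (P.b i) (P.Bc i)).natDegree = P.b i := by
    rw [minPolyOf]
    rw [Polynomial.natDegree_add_eq_left_of_degree_lt]
    · simp
    · rw [Polynomial.degree_X_pow]
      refine lt_of_le_of_lt (Polynomial.degree_sum_le _ _) ?_
      rw [Finset.sup_lt_iff (by exact WithBot.bot_lt_coe _)]
      intro j hj
      refine lt_of_le_of_lt (Polynomial.degree_C_mul_X_pow_le _ _) ?_
      have := Finset.mem_range.1 hj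
      exact_mod_cast (by omega : j < P.b i)
  have hinj : Function.Injective (algebraMap S (FractionRing S)) := IsFractionRing.injective _ _
  have hirr := P.hirr i
  rw [hq, Polynomial.map_mul, Polynomial.map_X] at hirr
  rcases hirr.isUnit_or_isUnit rfl with h | h
  · exact Polynomial.not_isUnit_X h
  · have h1 := Polynomial.natDegree_eq_zero_of_isUnit h
    rw [Polynomial.natDegree_map_eq_of_injective hinj] at h1
    have h2 : q ≠ 0 := by
      rintro rfl
      simp at h
    rw [hq, Polynomial.natDegree_X_mul h2, h1] at hmonic
    omega

/-- If `θ` is a root of a monic polynomial whose coefficients have large order, then so has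
`θ`. -/
theorem X_pow_dvd_root {K : Type*} [Field K] (θ : PowerSeries K) (b M : ℕ) (hb : 2 ≤ b)
    (β : ℕ → PowerSeries K) (hβ : ∀ j ≤ b - 2, PowerSeries.X ^ (M * (b - j)) ∣ β j)
    (hroot : θ ^ b + ∑ j ∈ Finset.range (b - 1), β j * θ ^ j = 0) :
    PowerSeries.X ^ M ∣ θ := by
  by_cases hθ : θ = 0
  · rw [hθ]; exact dvd_zero _
  obtain ⟨w, u, hu, rfl⟩ := exists_unit_mul θ hθ
  rw [X_pow_dvd_unit_mul hu]
  by_contra hlt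
  push Not at hlt
  have h1 : PowerSeries.X ^ (w * b + 1) ∣
      ∑ j ∈ Finset.range (b - 1), β j * (u * PowerSeries.X ^ w) ^ j := by
    refine Finset.dvd_sum fun j hj => ?_
    have hj' := Finset.mem_range.1 hj
    have h2 : (PowerSeries.X : PowerSeries K) ^ (M * (b - j) + w * j) ∣
        β j * (u * PowerSeries.X ^ w) ^ j := by
      rw [pow_add, mul_pow, ← pow_mul]
      exact mul_dvd_mul (hβ j (by omega)) (Dvd.intro_left _ rfl)
    refine (pow_dvd_pow _ ?_).trans h2
    obtain ⟨c, rfl⟩ : ∃ c, b = j + 1 + c := ⟨b - j - 1, by omega⟩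
    have : j + 1 + c - j = c + 1 := by omega
    rw [this]
    nlinarith
  have h3 : PowerSeries.X ^ (w * b + 1) ∣ (u * PowerSeries.X ^ w) ^ b := by
    rw [eq_neg_of_add_eq_zero_left hroot]
    exact h1.neg_right
  rw [mul_pow, ← pow_mul, X_pow_dvd_unit_mul (hu.pow b)] at h3
  omega

/-- (Corollary to Theorem `thm:main_order-rho`.)  Let `C` be the set of arcs `φ` in `X`
through `ξ` with `r_{X,φ}/ord(φ) = ord(G_X^{(d)})`.  Then
`ord(G_X^{(d)}) = max_{φ ∈ C} ρ_{X,φ}/ord(φ)`, and the maximum is attained. -/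
theorem elimination_order_eq_max_normalized_persistance
    (k : Type) [Field k] [CharZero k] (d : ℕ) (hd : 1 ≤ d)
    (S : Type) [CommRing S] [IsDomain S] [Algebra (MvPolynomial (Fin d) k) S]
    [Algebra k S] [IsScalarTower k (MvPolynomial (Fin d) k) S] [IsSLoc k d S]
    (D : Fin d → Derivation k S S)
    (hD : ∀ i j : Fin d, D j (zvar k d S i) = if i = j then 1 else 0)
    (P : Presentation k d S) :
    IsGreatest
      {q : ℝ≥0∞ | ∃ (K : Type) (_ : Field K) (_ : Algebra k K)
        (φ : BRing P →ₐ[k] PowerSeries K), IsArc P φ ∧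
        rOrd P D φ / (arcOrd P φ : ℝ≥0∞) = reesOrder (mS k d S) (elimAlg P D) ∧
        q = (rho P D φ : ℝ≥0∞) / (arcOrd P φ : ℝ≥0∞)}
      (reesOrder (mS k d S) (elimAlg P D)) := by
  haveI := P.hprime
  haveI : IsDomain (BRing P) := Ideal.Quotient.isDomain P.I
  haveI : Module.Finite S (BRing P) := P.hfinite
  have hS : ∀ s : S, s ≠ 0 → ∃ n, s ∈ mS k d S ^ n ∧ s ∉ mS k d S ^ (n + 1) := by
    obtain ⟨K, _, _, φ, e, -, -, -, h⟩ :=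
      exists_generic_arc k d S (BRing P) P.hinj 1 le_rfl
    intro s hs
    obtain ⟨n, u, -, h1, h2, -⟩ := h s hs
    exact ⟨n, h1, h2⟩
  obtain ⟨i₀, j₀, ν₀, hj₀, hB₀, hν1, hν2, hle, hel⟩ := elim_data D P hS
  have hgen₀ := elimAlg_gen_mem D P i₀ j₀ hj₀
  have hb₀ := P.hb i₀
  have hn0 : 2 ≤ P.b i₀ - j₀ := by omega
  generalize P.b i₀ - j₀ = n₀ at *
  have hord : reesOrder (mS k d S) (elimAlg P D) = (ν₀ : ℝ≥0∞) / (n₀ : ℝ≥0∞) := by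
    apply le_antisymm
    · apply sInf_le
      exact ⟨P.Bc i₀ j₀, n₀, hB₀, by omega, hgen₀, by rw [adicOrder_eq hν1 hν2]⟩
    · apply le_sInf
      rintro q ⟨f, l, hf, hl, hmem, rfl⟩
      have h1 := hel f l hmem
      obtain ⟨n, h2, h3⟩ := hS f hf
      rw [adicOrder_eq h2 h3]
      have h4 : ⌈((ν₀ : ℚ) * (l : ℚ) / (n₀ : ℚ))⌉₊ ≤ n := by
        by_contra hlt
        exact h3 (Ideal.pow_le_pow_right (by omega) h1)
      have h5 := Nat.ceil_le.1 h4
      rw [div_le_iff₀ (by exact_mod_cast (by omega : 0 < n₀))] at h5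
      have h6 : ν₀ * l ≤ n * n₀ := by exact_mod_cast h5
      have hl0 : (l : ℝ≥0∞) ≠ 0 := by exact_mod_cast (by omega : l ≠ 0)
      have hn0' : (n₀ : ℝ≥0∞) ≠ 0 := by exact_mod_cast (by omega : n₀ ≠ 0)
      rw [ENNReal.le_div_iff_mul_le (Or.inl hl0) (Or.inl (by simp)), ENNReal.div_eq_inv_mul,
        mul_assoc, ← ENNReal.div_eq_inv_mul,
        ENNReal.div_le_iff_le_mul (Or.inl hn0') (Or.inl (by simp))]
      exact_mod_cast h6
  have hupper : ∀ (K : Type) (_ : Field K) (_ : Algebra k K)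
      (φ : BRing P →ₐ[k] PowerSeries K), (rho P D φ : ℝ≥0∞) ≤ rOrd P D φ := by
    intro K _ _ φ
    exact le_reesOrder _ _ fun f l hl hf => X_pow_persist_dvd _ f l hl hf
  constructor
  swap
  · rintro q ⟨K, _, _, φ, -, h, rfl⟩
    rw [← h]
    exact ENNReal.div_le_div_right (hupper _ _ _ φ) _
  obtain ⟨K, _, _, φ, e, he, hφm, hφz, hφ⟩ :=
    exists_generic_arc k d S (BRing P) P.hinj n₀ (by omega)
  have hE1 : 1 ≤ e * n₀ := Nat.mul_pos he (by omega)
  have hEM : e * n₀ ≤ e * ν₀ := Nat.mul_le_mul_left _ hle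
  have hG : ∀ (g : S) (l : ℕ), (C g * X ^ l : Polynomial S) ∈ elimAlg P D →
      PowerSeries.X ^ (e * ν₀ * l) ∣ φ (algebraMap S (BRing P) g) := by
    intro g l hg
    refine (pow_dvd_pow _ ?_).trans (hφm g _ (hel g l hg))
    have h1 := Nat.le_ceil ((ν₀ : ℚ) * (l : ℚ) / (n₀ : ℚ))
    rw [div_le_iff₀ (by exact_mod_cast (by omega : 0 < n₀))] at h1
    have h2 : ν₀ * l ≤ ⌈((ν₀ : ℚ) * (l : ℚ) / (n₀ : ℚ))⌉₊ * n₀ := by exact_mod_cast h1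
    calc e * ν₀ * l = e * (ν₀ * l) := by ring
      _ ≤ e * (⌈((ν₀ : ℚ) * (l : ℚ) / (n₀ : ℚ))⌉₊ * n₀) := Nat.mul_le_mul_left _ h2
      _ = _ := by ring
  have hrt : ∀ i, φ (theta P i) ^ P.b i + ∑ j ∈ Finset.range (P.b i - 1),
      φ (algebraMap S (BRing P) (P.Bc i j)) * φ (theta P i) ^ j = 0 := by
    intro i
    have h := congrArg φ (P.hroot i)
    rw [minPolyOf, map_add, map_pow, Polynomial.aeval_X, map_sum, map_add, map_pow, map_sum,
      map_zero] at h
    rw [← h]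
    congr 1
    refine Finset.sum_congr rfl fun j _ => ?_
    rw [map_mul, map_pow, Polynomial.aeval_X, Polynomial.aeval_C, map_mul, map_pow]
    rfl
  have hθ : ∀ i, PowerSeries.X ^ (e * ν₀) ∣ φ (theta P i) := fun i =>
    X_pow_dvd_root _ (P.b i) _ (P.hb i) (fun j => φ (algebraMap S (BRing P) (P.Bc i j)))
      (fun j hj => hG _ _ (elimAlg_gen_mem D P i j hj)) (hrt i)
  have hφ0 : ∀ s : S, s ≠ 0 → φ (algebraMap S (BRing P) s) ≠ 0 := by
    intro s hs
    obtain ⟨n, u, hu, -, -, h⟩ := hφ s hs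
    rw [h]
    exact mul_ne_zero hu.ne_zero (pow_ne_zero _ PowerSeries.X_ne_zero)
  have hθ0 : ∀ i, φ (theta P i) ≠ 0 := by
    intro i h0
    have h := hrt i
    have hb := P.hb i
    rw [h0, zero_pow (by omega), zero_add,
      Finset.sum_eq_single_of_mem 0 (Finset.mem_range.2 (by omega))
        (fun j _ hj => by rw [zero_pow hj, mul_zero]), pow_zero, mul_one] at h
    exact hφ0 _ (Bc_zero_ne_zero P i) h
  have hz0 : ∀ j, φ (algebraMap S (BRing P) (zvar k d S j)) ≠ 0 := by
    intro j
    obtain ⟨u, hu, h⟩ := hφz j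
    rw [h]
    exact mul_ne_zero hu.ne_zero (pow_ne_zero _ PowerSeries.X_ne_zero)
  have htId : ∀ f : PowerSeries K, PowerSeries.X ^ (e * n₀) ∣ f → f ∈ tId K := by
    intro f hf
    rw [← pow_one (tId K), mem_tId_pow]
    exact (pow_dvd_pow _ hE1).trans hf
  have harc : IsArc P φ := by
    refine ⟨fun s hs => htId _ ?_, fun i => htId _ ((pow_dvd_pow _ hEM).trans (hθ i)), hθ0, hz0⟩
    have := hφm s 1 (by rwa [pow_one])
    rwa [mul_one] at this
  have harcOrd : arcOrd P φ = e * n₀ := by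
    have hg : IsLeast ((Set.range fun i => tOrd (φ (theta P i))) ∪
        (Set.range fun j => tOrd (φ (algebraMap S (BRing P) (zvar k d S j))))) (e * n₀) := by
      have hzo : ∀ j, tOrd (φ (algebraMap S (BRing P) (zvar k d S j))) = e * n₀ := by
        intro j
        obtain ⟨u, hu, h⟩ := hφz j
        rw [h, tOrd, adicOrder_unit_mul hu]
      constructor
      · exact Or.inr ⟨⟨0, hd⟩, hzo _⟩
      · rintro n (⟨i, rfl⟩ | ⟨j, rfl⟩)
        · exact le_adicOrder (hθ0 i) ((pow_dvd_pow _ hEM).trans (hθ i))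
        · exact (hzo j).ge
    exact hg.csInf_eq
  have hcon : ∀ (f : PowerSeries K) (l : ℕ),
      (C f * X ^ l : Polynomial (PowerSeries K)) ∈ contactAlg P D φ →
      PowerSeries.X ^ (e * ν₀ * l) ∣ f := by
    intro f l hf
    let H := filtSub (fun l => Ideal.span {(PowerSeries.X : PowerSeries K) ^ (e * ν₀ * l)})
      (by simp) (by
        intro i j a b ha hb
        rw [Ideal.mem_span_singleton] at ha hb ⊢
        rw [mul_add, pow_add]
        exact mul_dvd_mul ha hb)
    have hH : contactAlg P D φ ≤ H := by
      apply Algebra.adjoin_le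
      rintro p (⟨i, rfl⟩ | ⟨g, m, hg, -, rfl⟩)
      · show (C (φ (theta P i)) * X : Polynomial (PowerSeries K)) ∈ H
        have h1 : (C (φ (theta P i)) * X ^ 1 : Polynomial (PowerSeries K)) ∈ H := by
          rw [C_mul_X_pow_mem_filtSub, Ideal.mem_span_singleton, mul_one]
          exact hθ i
        rwa [pow_one] at h1
      · show _ ∈ H
        rw [C_mul_X_pow_mem_filtSub, Ideal.mem_span_singleton]
        exact hG g m hg
    have h2 := hH hf
    rwa [C_mul_X_pow_mem_filtSub, Ideal.mem_span_singleton] at h2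
  obtain ⟨u, hu, hu0⟩ : ∃ u : PowerSeries K, IsUnit u ∧
      (C (u * PowerSeries.X ^ (e * ν₀ * n₀)) * X ^ n₀ : Polynomial (PowerSeries K)) ∈
        contactAlg P D φ := by
    obtain ⟨n, u, hu, h1, h2, h3⟩ := hφ _ hB₀
    have hn : n = ν₀ := by rw [← adicOrder_eq h1 h2, adicOrder_eq hν1 hν2]
    refine ⟨u, hu, ?_⟩
    have h4 : e * ν₀ * n₀ = e * n₀ * n := by rw [hn]; ring
    rw [h4, ← h3]
    exact Algebra.subset_adjoin (Or.inr ⟨P.Bc i₀ j₀, n₀, hgen₀, hφ0 _ hB₀, rfl⟩)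
  have hX0 : ∀ n : ℕ, (PowerSeries.X : PowerSeries K) ^ n ≠ 0 := fun n =>
    pow_ne_zero _ PowerSeries.X_ne_zero
  have hr : rOrd P D φ = ((e * ν₀ : ℕ) : ℝ≥0∞) := by
    apply le_antisymm
    · apply sInf_le
      refine ⟨_, n₀, mul_ne_zero hu.ne_zero (hX0 _), by omega, hu0, ?_⟩
      rw [adicOrder_unit_mul hu]
      have hn0' : (n₀ : ℝ≥0∞) ≠ 0 := by exact_mod_cast (by omega : n₀ ≠ 0)
      rw [Nat.cast_mul (e * ν₀) n₀, ENNReal.mul_div_cancel_right hn0' (by simp)]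
    · exact le_reesOrder _ _ fun f l _ hf => hcon f l hf
  have hρ : rho P D φ = e * ν₀ := by
    have hg : IsLeast {κ : ℕ | ¬ SingFam (tId K)
        ((transformFam (PowerSeries.X : PowerSeries K))^[κ] (idealFam (contactAlg P D φ)))}
        (e * ν₀) := by
      constructor
      · intro hs
        have h1 : u ∈ (transformFam (PowerSeries.X : PowerSeries K))^[e * ν₀]
            (idealFam (contactAlg P D φ)) n₀ := by
          rw [mem_transform_iterate, mem_idealFam, mul_comm n₀]
          exact hu0
        have h2 := hs n₀ (by omega) h1
        rw [mem_tId_pow] at h2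
        have h3 : (PowerSeries.X : PowerSeries K) ^ n₀ ∣ u * PowerSeries.X ^ 0 := by
          simpa using h2
        rw [X_pow_dvd_unit_mul hu] at h3
        omega
      · intro κ hκ
        by_contra hlt
        apply hκ
        intro l hl f hf
        rw [mem_transform_iterate, mem_idealFam] at hf
        have h1 := hcon _ _ hf
        rw [mem_tId_pow]
        have h2 : (PowerSeries.X : PowerSeries K) ^ (l + l * κ) ∣ f * PowerSeries.X ^ (l * κ) := by
          refine (pow_dvd_pow _ ?_).trans h1
          have : κ + 1 ≤ e * ν₀ := by omega
          nlinarith [Nat.mul_le_mul_right l this]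
        rw [pow_add] at h2
        exact (mul_dvd_mul_iff_right (hX0 _)).1 h2
    exact hg.csInf_eq
  have hratio : ((e * ν₀ : ℕ) : ℝ≥0∞) / ((e * n₀ : ℕ) : ℝ≥0∞) = (ν₀ : ℝ≥0∞) / (n₀ : ℝ≥0∞) := by
    rw [Nat.cast_mul, Nat.cast_mul]
    exact ENNReal.mul_div_mul_left _ _ (by exact_mod_cast (by omega : e ≠ 0)) (by simp)
  rw [hord]
  refine ⟨K, inferInstance, inferInstance, φ, harc, ?_, ?_⟩
  · rw [hr, harcOrd, hratio]
  · rw [hρ, harcOrd, hratio]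

end NashMult
end
end

section
/- Let f = x^b + B_{b−2}x^{b−2} + ⋯ + B_1x + B_0 ∈ S[x] with b ≥ 2 and B_i ∈ S for all i. Then the differential closure Diff(S[x][fW^b]) of the Rees algebra over S[x] generated by fW^b equals the smallest differentially closed Rees algebra over S[x] containing xW and B_iW^{b−i} for i = 0,…,b−2; equivalently, Diff(S[x][fW^b]) = S[x][xW] ⊙ Diff(S[x][B_{b−2}W^2, B_{b−3}W^3, …, B_0W^b]). -/
open Polynomial
open scoped ENNReal

noncomputable section

namespace NashMult

theorem iter_mem_aux {S : Type} [CommRing S]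
    (G : Subalgebra (Polynomial S) (Polynomial (Polynomial S)))
    (hG : ∀ (f : Polynomial S) (l : ℕ), (C f * X ^ (l + 1) : Polynomial (Polynomial S)) ∈ G →
      (C (derivative f) * X ^ l : Polynomial (Polynomial S)) ∈ G) (n : ℕ) :
    ∀ (f : Polynomial S) (l : ℕ), (C f * X ^ (l + n) : Polynomial (Polynomial S)) ∈ G →
      (C (derivative^[n] f) * X ^ l : Polynomial (Polynomial S)) ∈ G := by
  induction n with
  | zero => intro f l h; simpa using h
  | succ n ih =>
    intro f l h
    rw [Function.iterate_succ_apply]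
    exact ih _ _ (hG _ _ (by rwa [add_assoc]))

theorem C_mul_mem_aux {R : Type} [CommRing R] (G : Subalgebra R (Polynomial R)) (r : R)
    {p : Polynomial R} (hp : p ∈ G) : C r * p ∈ G :=
  G.mul_mem (G.algebraMap_mem r) hp

theorem cancel_nat_aux {k : Type} [Field k] [CharZero k] {S : Type} [CommRing S] [Algebra k S]
    (G : Subalgebra (Polynomial S) (Polynomial (Polynomial S))) (n : ℕ) (hn : n ≠ 0)
    (f : Polynomial S) (l : ℕ)
    (h : (C ((n : Polynomial S) * f) * X ^ l : Polynomial (Polynomial S)) ∈ G) :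
    (C f * X ^ l : Polynomial (Polynomial S)) ∈ G := by
  have h2 := C_mul_mem_aux G (algebraMap k (Polynomial S) (n : k)⁻¹) h
  rw [← mul_assoc, ← C_mul, ← mul_assoc] at h2
  have h3 : algebraMap k (Polynomial S) (n : k)⁻¹ * (n : Polynomial S) = 1 := by
    rw [← map_natCast (algebraMap k (Polynomial S)) n, ← map_mul,
      inv_mul_cancel₀ (Nat.cast_ne_zero.mpr hn), map_one]
  rwa [h3, one_mul] at h2

theorem iter_sum_aux {S : Type} [CommRing S] (Bc : ℕ → S) (m n : ℕ) (h : m ≤ n) :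
    derivative^[n] (∑ j ∈ Finset.range m, C (Bc j) * X ^ j : Polynomial S) = 0 := by
  rw [iterate_derivative_sum]
  refine Finset.sum_eq_zero fun j hj => ?_
  rw [Finset.mem_range] at hj
  exact iterate_derivative_eq_zero ((natDegree_C_mul_X_pow_le _ _).trans_lt (by omega))

theorem monom_mem_aux {S : Type} [CommRing S]
    (G : Subalgebra (Polynomial S) (Polynomial (Polynomial S)))
    (hx : (C (X : Polynomial S) * X : Polynomial (Polynomial S)) ∈ G) (s : S) (i b : ℕ)
    (hi : i ≤ b) (h : (C (C s) * X ^ (b - i) : Polynomial (Polynomial S)) ∈ G) :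
    (C (C s * X ^ i) * X ^ b : Polynomial (Polynomial S)) ∈ G := by
  have := G.mul_mem h (G.pow_mem hx i)
  obtain ⟨c, rfl⟩ := Nat.exists_eq_add_of_le hi
  rw [Nat.add_sub_cancel_left] at this
  convert this using 1
  rw [C_mul, C_pow]
  ring

theorem coeffs_mem_aux {k : Type} [Field k] [CharZero k] {S : Type} [CommRing S] [Algebra k S]
    (G : Subalgebra (Polynomial S) (Polynomial (Polynomial S)))
    (hG : ∀ (f : Polynomial S) (l : ℕ), (C f * X ^ (l + 1) : Polynomial (Polynomial S)) ∈ G →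
      (C (derivative f) * X ^ l : Polynomial (Polynomial S)) ∈ G)
    (hx : (C (X : Polynomial S) * X : Polynomial (Polynomial S)) ∈ G) (Bc : ℕ → S) (b : ℕ)
    (m : ℕ) : m ≤ b →
    (C (∑ j ∈ Finset.range m, C (Bc j) * X ^ j) * X ^ b : Polynomial (Polynomial S)) ∈ G →
    ∀ i < m, (C (C (Bc i)) * X ^ (b - i) : Polynomial (Polynomial S)) ∈ G := by
  induction m with
  | zero => intro _ _ i hi; omega
  | succ m ih =>
    intro hm h
    have key : (C (C (Bc m)) * X ^ (b - m) : Polynomial (Polynomial S)) ∈ G := by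
      have h1 := iter_mem_aux G hG m (∑ j ∈ Finset.range (m + 1), C (Bc j) * X ^ j) (b - m)
        (by rwa [Nat.sub_add_cancel (by omega)])
      rw [Finset.sum_range_succ, iterate_map_add, iter_sum_aux Bc m m le_rfl, zero_add,
        iterate_derivative_C_mul, iterate_derivative_X_pow_eq_natCast_mul,
        Nat.descFactorial_self, Nat.sub_self, pow_zero, mul_one, mul_comm (C (Bc m))] at h1
      exact cancel_nat_aux (k := k) G _ (Nat.factorial_ne_zero m) _ _ h1
    intro i hi
    rcases Nat.lt_succ_iff_lt_or_eq.mp hi with hi | rfl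
    · refine ih (by omega) ?_ i hi
      have := G.sub_mem h (monom_mem_aux G hx (Bc m) m b (by omega) key)
      rwa [← sub_mul, ← C_sub, Finset.sum_range_succ, add_sub_cancel_right] at this
    · exact key

/-- (Lemma `lema:generadores_algebra`.)  For `f = x^b + B_{b-2} x^{b-2} + ⋯ + B_0 ∈ S[x]`,
the differential closure `Diff(S[x][f W^b])` equals the smallest differentially closed Rees
algebra over `S[x]` containing `x W` and the elements `B_i W^{b-i}`, `i = 0, …, b-2`
(equivalently, `Diff(S[x][f W^b]) = S[x][x W] ⊙ Diff(S[x][B_{b-2} W^2, …, B_0 W^b])`).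
Here the differential structure on `S[x]` is given by `∂/∂x` (the derivation `Dx`) together
with the extensions `Dz j` of the `∂/∂z_j` (the derivations `DS j` of `S`). -/
theorem diff_closure_of_hypersurface_eq
    (k : Type) [Field k] [CharZero k] (d : ℕ) (hd : 1 ≤ d)
    (S : Type) [CommRing S] [IsDomain S] [Algebra (MvPolynomial (Fin d) k) S]
    [Algebra k S] [IsScalarTower k (MvPolynomial (Fin d) k) S] [IsSLoc k d S]
    (DS : Fin d → Derivation k S S)
    (hDS : ∀ i j : Fin d, DS j (zvar k d S i) = if i = j then 1 else 0)
    (Dz : Fin d → Derivation k (Polynomial S) (Polynomial S))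
    (hDzC : ∀ (j : Fin d) (s : S), Dz j (Polynomial.C s) = Polynomial.C (DS j s))
    (hDzX : ∀ j : Fin d, Dz j (Polynomial.X : Polynomial S) = 0)
    (Dx : Derivation k (Polynomial S) (Polynomial S))
    (hDxC : ∀ s : S, Dx (Polynomial.C s) = 0)
    (hDxX : Dx (Polynomial.X : Polynomial S) = 1)
    (b : ℕ) (hb : 2 ≤ b) (Bc : ℕ → S) :
    diffClosure (fun o : Option (Fin d) => o.elim Dx Dz)
        {(Polynomial.C (minPolyOf b Bc) * Polynomial.X ^ b :
          Polynomial (Polynomial S))} =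
      diffClosure (fun o : Option (Fin d) => o.elim Dx Dz)
        (insert (Polynomial.C (Polynomial.X : Polynomial S) * Polynomial.X)
          {p : Polynomial (Polynomial S) | ∃ i ≤ b - 2,
            p = Polynomial.C (Polynomial.C (Bc i)) * Polynomial.X ^ (b - i)}) := by
  have hDx : ∀ p : Polynomial S, Dx p = derivative p := by
    intro p
    induction p using Polynomial.induction_on' with
    | add p q hp hq => rw [map_add, map_add, hp, hq]
    | monomial n a =>
      rw [← C_mul_X_pow_eq_monomial, Derivation.leibniz, Derivation.leibniz_pow, hDxC, hDxX,
        derivative_C_mul, derivative_X_pow]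
      simp
  unfold diffClosure
  congr 1
  ext G
  simp only [Set.mem_ofPred_eq]
  refine and_congr_left ?_
  rintro ⟨-, -, hD⟩
  have hG : ∀ (f : Polynomial S) (l : ℕ),
      (C f * X ^ (l + 1) : Polynomial (Polynomial S)) ∈ G →
      (C (derivative f) * X ^ l : Polynomial (Polynomial S)) ∈ G := by
    intro f l h
    have := hD f l none h
    simpa [hDx] using this
  rw [Set.singleton_subset_iff, Set.insert_subset_iff, SetLike.mem_coe, SetLike.mem_coe]
  unfold minPolyOf
  constructor
  · intro h
    have hx : (C (X : Polynomial S) * X : Polynomial (Polynomial S)) ∈ G := by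
      have h1 := iter_mem_aux G hG (b - 1) _ 1 (by rwa [Nat.add_sub_cancel' (by omega)])
      rw [iterate_map_add, iter_sum_aux Bc _ _ le_rfl, add_zero,
        iterate_derivative_X_pow_eq_natCast_mul, Nat.sub_sub_self (by omega), pow_one] at h1
      have h2 := cancel_nat_aux (k := k) G _
        (by rw [Ne, Nat.descFactorial_eq_zero_iff_lt]; omega) _ _ h1
      rwa [pow_one] at h2
    refine ⟨hx, ?_⟩
    rintro p ⟨i, hi, rfl⟩
    refine coeffs_mem_aux (k := k) G hG hx Bc b (b - 1) (by omega) ?_ i (by omega)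
    have h3 := G.sub_mem h (G.pow_mem hx b)
    rwa [mul_pow, ← C_pow, ← sub_mul, ← C_sub, add_sub_cancel_left] at h3
  · rintro ⟨hx, hB⟩
    rw [C_add, add_mul, map_sum, Finset.sum_mul]
    refine G.add_mem ?_ (G.sum_mem ?_)
    · rw [C_pow, ← mul_pow]
      exact G.pow_mem hx b
    · intro j hj
      rw [Finset.mem_range] at hj
      exact monom_mem_aux G hx _ _ _ (by omega) (hB ⟨j, by omega, rfl⟩)

end NashMult
end
end

section
/- In the hypersurface setting of the context, let φ : S[x] → K[[t]] be an arc in X = V(f) through the closed point with φ(x) = u_0t^{α_0} and φ(z_j) = u_jt^{α_j} (units u_j ∈ K[[t]], positive integers α_j). Then α_0 ≥ min over those i with φ(B_i) ≠ 0 of ord_t(φ(B_i))/(b−i) (this set of indices is nonempty), and consequently ord(G^{(1)}_{X_0,φ}) = ord(G^{(1)}_{X_0,φ^{(d)}}): the order of the contact algebra of φ equals the order of the contact algebra of its projection φ^{(d)}. -/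
open Polynomial
open scoped ENNReal

noncomputable section

namespace NashMult

variable (k : Type) [Field k] (d : ℕ)
variable (S : Type) [CommRing S] [Algebra (MvPolynomial (Fin d) k) S] [Algebra k S]

/-- The elimination algebra `G_X^{(d)} = Diff(S[B_{b-2} W^2, …, B_0 W^b])` over `S` of the
hypersurface `X = V(f)`, where `f = x^b + B_{b-2} x^{b-2} + ⋯ + B_0`. -/
def hypElim (D : Fin d → Derivation k S S) (b : ℕ) (Bc : ℕ → S) :
    Subalgebra S (Polynomial S) :=
  diffClosure D {p : Polynomial S | ∃ i ≤ b - 2,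
    p = Polynomial.C (Bc i) * Polynomial.X ^ (b - i)}

/-- An arc in the hypersurface `X = V(f)` through the closed point `ξ`: a `k`-algebra
homomorphism `φ : S[x] → K⟦t⟧` with `φ(f) = 0` and `φ(x), φ(z_1), …, φ(z_d) ∈ (t)`,
with `φ(x)` and all `φ(z_j)` nonzero. -/
def IsHypArc (b : ℕ) (Bc : ℕ → S) {K : Type} [Field K] [Algebra k K]
    (φ : Polynomial S →ₐ[k] PowerSeries K) : Prop :=
  φ (minPolyOf b Bc) = 0 ∧
  φ Polynomial.X ∈ tId K ∧ (∀ j, φ (Polynomial.C (zvar k d S j)) ∈ tId K) ∧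
  φ Polynomial.X ≠ 0 ∧ (∀ j, φ (Polynomial.C (zvar k d S j)) ≠ 0)

/-- The order of the arc `φ`: `ord(φ) = min {α_0, α_1, …, α_d}`, where
`α_0 = ord_t φ(x)` and `α_j = ord_t φ(z_j)`. -/
def hypArcOrd {K : Type} [Field K] [Algebra k K]
    (φ : Polynomial S →ₐ[k] PowerSeries K) : ℕ :=
  sInf (insert (tOrd (φ Polynomial.X))
    (Set.range fun j => tOrd (φ (Polynomial.C (zvar k d S j)))))

/-- The contact algebra `G^{(1)}_{X_0,φ}`: the Rees algebra over `K⟦t⟧` generated by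
`t^{α_0} W` together with all `φ(g) W^l`, for `g W^l` a homogeneous element of `G_X^{(d)}`
with `φ(g) ≠ 0`. -/
def hypContact (D : Fin d → Derivation k S S) (b : ℕ) (Bc : ℕ → S)
    {K : Type} [Field K] [Algebra k K] (φ : Polynomial S →ₐ[k] PowerSeries K) :
    Subalgebra (PowerSeries K) (Polynomial (PowerSeries K)) :=
  Algebra.adjoin (PowerSeries K)
    (insert
      (Polynomial.C ((PowerSeries.X : PowerSeries K) ^ tOrd (φ Polynomial.X)) * Polynomial.X)
      {p : Polynomial (PowerSeries K) | ∃ (g : S) (l : ℕ),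
        (Polynomial.C g * Polynomial.X ^ l : Polynomial S) ∈ hypElim k d S D b Bc ∧
        φ (Polynomial.C g) ≠ 0 ∧
        p = Polynomial.C (φ (Polynomial.C g)) * Polynomial.X ^ l})


theorem tOrd_cast_eq_order {K : Type} [Field K] (g : PowerSeries K) (hg : g ≠ 0) :
    ((tOrd g : ℕ) : ℕ∞) = g.order := by
  have hne : g.order ≠ ⊤ := fun h => hg (PowerSeries.order_eq_top.mp h)
  obtain ⟨m, hm⟩ := ENat.ne_top_iff_exists.mp hne
  have hset : {n : ℕ | g ∈ (tId K) ^ n} = Set.Iic m := by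
    ext n
    simp only [tId, Ideal.span_singleton_pow, Set.mem_setOf_eq, Ideal.mem_span_singleton,
      Set.mem_Iic, PowerSeries.X_pow_dvd_iff]
    constructor
    · intro h
      have := PowerSeries.nat_le_order g n h
      rw [← hm] at this
      exact_mod_cast this
    · intro h i hi
      apply PowerSeries.coeff_of_lt_order
      rw [← hm]
      exact_mod_cast lt_of_lt_of_le hi h
  unfold tOrd adicOrder
  rw [hset, csSup_Iic, hm]

theorem tOrd_cast_ennreal {K : Type} [Field K] (g : PowerSeries K) (hg : g ≠ 0) :
    ((tOrd g : ℕ) : ℝ≥0∞) = ((g.order : ℕ∞) : ℝ≥0∞) := by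
  rw [← tOrd_cast_eq_order g hg]; simp

/-- Polynomials all of whose coefficients satisfy `r * n ≤ ord (coeff n)`. -/
def slopeAlg (K : Type) [Field K] (r : ℝ≥0∞) :
    Subalgebra (PowerSeries K) (Polynomial (PowerSeries K)) where
  carrier := {p | ∀ n : ℕ, r * n ≤ (((p.coeff n).order : ℕ∞) : ℝ≥0∞)}
  mul_mem' := by
    intro p q hp hq n
    rw [Polynomial.coeff_mul]
    refine Finset.sum_induction _
      (fun c : PowerSeries K => r * n ≤ ((c.order : ℕ∞) : ℝ≥0∞)) ?_ ?_ ?_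
    · intro a c ha hc
      have h1 := PowerSeries.min_order_le_order_add a c
      rcases min_le_iff.mp h1 with h | h
      · exact ha.trans (ENat.toENNReal_le.mpr h)
      · exact hc.trans (ENat.toENNReal_le.mpr h)
    · simp
    · intro x hx
      have hx' := Finset.HasAntidiagonal.mem_antidiagonal.mp hx
      rw [PowerSeries.order_mul, ENat.toENNReal_add, ← hx', Nat.cast_add, mul_add]
      exact add_le_add (hp _) (hq _)
  add_mem' := by
    intro p q hp hq n
    rw [Polynomial.coeff_add]
    have h1 := PowerSeries.min_order_le_order_add (p.coeff n) (q.coeff n)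
    rcases min_le_iff.mp h1 with h | h
    · exact (hp n).trans (ENat.toENNReal_le.mpr h)
    · exact (hq n).trans (ENat.toENNReal_le.mpr h)
  algebraMap_mem' := by
    intro a n
    rw [Polynomial.algebraMap_apply, Polynomial.coeff_C]
    split_ifs with h
    · simp [h]
    · simp

theorem mem_slopeAlg_monomial {K : Type} [Field K] (r : ℝ≥0∞) (g : PowerSeries K) (l : ℕ)
    (h : r * l ≤ ((g.order : ℕ∞) : ℝ≥0∞)) :
    (C g * X ^ l : Polynomial (PowerSeries K)) ∈ slopeAlg K r := by
  intro n
  rw [Polynomial.coeff_C_mul_X_pow]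
  split_ifs with hn
  · rw [hn]; exact h
  · simp

theorem le_reesOrder_of_le_slopeAlg {K : Type} [Field K] (r : ℝ≥0∞)
    (G : Subalgebra (PowerSeries K) (Polynomial (PowerSeries K))) (h : G ≤ slopeAlg K r) :
    r ≤ reesOrder (tId K) G := by
  refine le_sInf ?_
  rintro q ⟨f, n, hf, hn, hm, rfl⟩
  have h1 := h hm n
  rw [Polynomial.coeff_C_mul_X_pow, if_pos rfl, ← tOrd_cast_ennreal f hf] at h1
  rw [ENNReal.le_div_iff_mul_le (Or.inl (by simp; omega)) (Or.inl (by simp))]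
  exact h1

theorem reesOrder_mul_le {K : Type} [Field K]
    (G : Subalgebra (PowerSeries K) (Polynomial (PowerSeries K))) (f : PowerSeries K) (n : ℕ)
    (hf : f ≠ 0) (hm : (C f * X ^ n : Polynomial (PowerSeries K)) ∈ G) :
    reesOrder (tId K) G * n ≤ ((f.order : ℕ∞) : ℝ≥0∞) := by
  rcases Nat.eq_zero_or_pos n with rfl | hn
  · simp
  · rw [← tOrd_cast_ennreal f hf,
      ← ENNReal.le_div_iff_mul_le (Or.inl (by simp; omega)) (Or.inl (by simp))]
    exact sInf_le ⟨f, n, hf, hn, hm, rfl⟩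

/-- (Lemma `lemma:ord_amalgama_final`.)  For an arc `φ` in the hypersurface `X = V(f)`
through the closed point, with `φ(x) = u_0 t^{α_0}`, one has
`α_0 ≥ min {ord_t(φ(B_i))/(b-i) : φ(B_i) ≠ 0}` (and this set of indices is nonempty);
consequently the order of the contact algebra of `φ` equals the order of the contact
algebra of its projection `φ^{(d)}` to `S`. -/
theorem contact_order_eq_projected_contact_order
    (k : Type) [Field k] [CharZero k] (d : ℕ) (hd : 1 ≤ d)
    (S : Type) [CommRing S] [IsDomain S] [Algebra (MvPolynomial (Fin d) k) S]
    [Algebra k S] [IsScalarTower k (MvPolynomial (Fin d) k) S] [IsSLoc k d S]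
    (D : Fin d → Derivation k S S)
    (hD : ∀ i j : Fin d, D j (zvar k d S i) = if i = j then 1 else 0)
    (b : ℕ) (hb : 2 ≤ b) (Bc : ℕ → S)
    (hmem : ∀ i ≤ b - 2, Bc i ∈ (mS k d S) ^ (b - i))
    (hnz : ∃ i ≤ b - 2, Bc i ≠ 0)
    (K : Type) [Field K] [Algebra k K]
    (φ : Polynomial S →ₐ[k] PowerSeries K) (hφ : IsHypArc k d S b Bc φ) :
    (∃ i, i ≤ b - 2 ∧ φ (Polynomial.C (Bc i)) ≠ 0 ∧
      (tOrd (φ (Polynomial.C (Bc i))) : ℝ≥0∞) / ((b - i : ℕ) : ℝ≥0∞) ≤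
        (tOrd (φ (Polynomial.X : Polynomial S)) : ℝ≥0∞)) ∧
    reesOrder (tId K) (hypContact k d S D b Bc φ) =
      reesOrder (tId K)
        (arcImage (fun s : S => φ (Polynomial.C s)) (hypElim k d S D b Bc)) := by
  obtain ⟨hf0, -, -, hx0, -⟩ := hφ
  have hA : ∃ i, i ≤ b - 2 ∧ φ (Polynomial.C (Bc i)) ≠ 0 ∧
      tOrd (φ (Polynomial.C (Bc i))) ≤ (b - i) * tOrd (φ (Polynomial.X : Polynomial S)) := by
    by_contra hcon
    push Not at hcon
    set a := tOrd (φ (Polynomial.X : Polynomial S)) with ha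
    have hxo : (φ (Polynomial.X : Polynomial S)).order = (a : ℕ∞) :=
      (tOrd_cast_eq_order _ hx0).symm
    simp only [minPolyOf, map_add, map_pow, map_sum, map_mul] at hf0
    have hdvd : (PowerSeries.X : PowerSeries K) ^ (b * a + 1) ∣
        ∑ j ∈ Finset.range (b - 1), φ (Polynomial.C (Bc j)) * φ Polynomial.X ^ j := by
      refine Finset.dvd_sum fun j hj => ?_
      have hj' : j ≤ b - 2 := by have := Finset.mem_range.mp hj; omega
      by_cases hB : φ (Polynomial.C (Bc j)) = 0
      · simp [hB]
      · have h1 := hcon j hj' hB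
        rw [PowerSeries.X_pow_dvd_iff]
        intro m hm
        apply PowerSeries.coeff_of_lt_order
        rw [PowerSeries.order_mul, PowerSeries.order_pow, hxo, ← tOrd_cast_eq_order _ hB]
        have h2 : b * a = (b - j) * a + j * a := by
          rw [← add_mul]; congr 1; omega
        have h3 : m < tOrd (φ (Polynomial.C (Bc j))) + j * a := by omega
        rw [nsmul_eq_mul]
        exact_mod_cast h3
    have h4 : (PowerSeries.X : PowerSeries K) ^ (b * a + 1) ∣ φ Polynomial.X ^ b := by
      rw [eq_neg_of_add_eq_zero_left hf0]
      exact (dvd_neg).mpr hdvd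
    have h5 := PowerSeries.nat_le_order _ _ (PowerSeries.X_pow_dvd_iff.mp h4)
    rw [PowerSeries.order_pow, hxo, nsmul_eq_mul] at h5
    have h6 : b * a + 1 ≤ b * a := by exact_mod_cast h5
    omega
  obtain ⟨i, hi, hB, hle⟩ := hA
  have hfirst : (tOrd (φ (Polynomial.C (Bc i))) : ℝ≥0∞) / ((b - i : ℕ) : ℝ≥0∞) ≤
        (tOrd (φ (Polynomial.X : Polynomial S)) : ℝ≥0∞) := by
    apply ENNReal.div_le_of_le_mul'
    exact_mod_cast hle
  refine ⟨⟨i, hi, hB, hfirst⟩, ?_⟩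
  set G := arcImage (fun s : S => φ (Polynomial.C s)) (hypElim k d S D b Bc) with hG
  have hgen : ∀ (g : S) (l : ℕ),
      (Polynomial.C g * Polynomial.X ^ l : Polynomial S) ∈ hypElim k d S D b Bc →
      φ (Polynomial.C g) ≠ 0 →
      (Polynomial.C (φ (Polynomial.C g)) * Polynomial.X ^ l) ∈ G := fun g l h1 h2 =>
    Algebra.subset_adjoin ⟨g, l, h1, h2, rfl⟩
  apply le_antisymm
  · have hsub : G ≤ hypContact k d S D b Bc φ :=
      Algebra.adjoin_mono (Set.subset_insert _ _)
    refine sInf_le_sInf ?_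
    rintro q ⟨f, n, h1, h2, h3, h4⟩
    exact ⟨f, n, h1, h2, hsub h3, h4⟩
  · apply le_reesOrder_of_le_slopeAlg
    refine Algebra.adjoin_le ?_
    rintro p (rfl | ⟨g, l, h1, h2, rfl⟩)
    · have hr : reesOrder (tId K) G ≤ (tOrd (φ (Polynomial.X : Polynomial S)) : ℝ≥0∞) := by
        refine le_trans (sInf_le ⟨φ (Polynomial.C (Bc i)), b - i, hB, by omega, ?_, rfl⟩) hfirst
        refine hgen _ _ ?_ hB
        refine Algebra.mem_sInf.mpr fun H hH => hH.1 ⟨i, hi, rfl⟩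
      have := mem_slopeAlg_monomial (reesOrder (tId K) G)
        ((PowerSeries.X : PowerSeries K) ^ tOrd (φ Polynomial.X)) 1
        (by rw [PowerSeries.order_X_pow]; simpa using hr)
      rwa [pow_one] at this
    · exact mem_slopeAlg_monomial _ _ _ (reesOrder_mul_le G _ _ h2 (hgen g l h1 h2))

end NashMult
end
end
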